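/- arXiv:1411.4196 — 2 statements merged into one kernel-verified Lean document; each statement's English description precedes it below -/
import Mathlib

section
/- Let k ≥ 2 be an integer. For all sufficiently large n with k dividing n, if ℱ is a family of subsets of [n] of size m = |ℱ| = k·2^{n/k} − k + 1 satisfying c(ℱ) = c(n,m) (i.e. ℱ maximises the number of comparable pairs among families of m subsets of [n]), then ℱ is a tower of k cubes of dimension n/k. -/
open Finset

/-- `crossComp 𝒜 ℬ` is the number of pairs `(A, B) ∈ 𝒜 × ℬ` with `A ⊊ B`. -/
def crossComp {n : ℕ} (𝒜 ℬ : Finset (Finset (Fin n))) : ℕ :=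
  ((𝒜 ×ˢ ℬ).filter (fun p => p.1 ⊂ p.2)).card

/-- `compCount ℱ` is the number of comparable pairs in `ℱ`, i.e. the number of unordered
pairs `{A, B}` of distinct sets in `ℱ` with `A ⊆ B` or `B ⊆ A`. -/
def compCount {n : ℕ} (ℱ : Finset (Finset (Fin n))) : ℕ := crossComp ℱ ℱ

/-- `maxComp n m` is `c(n,m)`, the maximum number of comparable pairs over all families of
`m` subsets of `[n]`. -/
def maxComp (n m : ℕ) : ℕ :=
  ((Finset.univ : Finset (Finset (Fin n))).powersetCard m).sup compCount

/-- `IsTower n k 𝒯` says that `𝒯` is a tower of `k` cubes of dimension `n/k` over `[n]`. -/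
def IsTower (n k : ℕ) (𝒯 : Finset (Finset (Fin n))) : Prop :=
  ∃ X : ℕ → Finset (Fin n),
    X 0 = ∅ ∧ X k = Finset.univ ∧
    (∀ i ≤ k, (X i).card = i * (n / k)) ∧
    (∀ i < k, X i ⊆ X (i + 1)) ∧
    𝒯 = Finset.univ.filter (fun F => ∃ i ∈ Finset.Icc 1 k, X (i - 1) ⊆ F ∧ F ⊆ X i)

/-!
Write `ℓ = n / k` and `N = 2 ^ ℓ`. A tower has at least `(k choose 2) (N - 1) ^ 2` comparable pairs,
so `ℱ` does too. By dependent random choice, a set that is the top of a positive proportion of all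
chains of `j` members of `ℱ` has more than `j * ℓ * k / (k + 1)` elements. Peel off, round after
round, the members of `ℱ` with few subsets among the remaining ones. A member that survives `k`
rounds is the top of many chains of length `k + 1`, so almost nothing survives, and `ℱ` splits into
`k` layers. Having so many comparable pairs forces the layers to have size about `N` and almost all
pairs in different layers to be nested; after pruning one gets families `P 0, …, P (k - 1)` such
that each member of `P i` lies below most members of `P j` for all `i < j`.

An element of the ground set on which neither `P i` nor `P j` is constant is heavily biased in both,
so an entropy-type count shows that every element is free in exactly one `P i`. Hence the `P i` lie
in the cubes of a tower `𝒯`, and `ℱ` differs from `𝒯` in at most `N / 16` sets. A set outside `𝒯` is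
comparable to at most `(k - 1) * N` members of `𝒯`, and to far fewer unless it arises from some
member of the chain underlying `𝒯` by exchanging one element, whereas a member of `𝒯` is comparable
to noticeably more. So exchanging a member of `ℱ \ 𝒯` for one of `𝒯 \ ℱ` would gain comparable
pairs.
-/

open Filter Rel

universe u

/-! ### Dependent random choice -/

section ChainDensity

variable {α : Type u} [DecidableEq α]

/-- The proportion of `j`-tuples of members of `ℱ` that form a chain `A₁ ⊆ ⋯ ⊆ A_j ⊆ X`. -/
noncomputable def chainDensity (ℱ : Finset (Finset α)) : ℕ → Finset α → ℝ
  | 0, _ => 1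
  | j + 1, X => (∑ A ∈ ℱ with A ⊆ X, chainDensity ℱ j A) / #ℱ

lemma chainDensity_nonneg (ℱ : Finset (Finset α)) (j : ℕ) (X : Finset α) :
    0 ≤ chainDensity ℱ j X := by
  induction j generalizing X with
  | zero => exact zero_le_one
  | succ j ih => exact div_nonneg (sum_nonneg fun A _ => ih A) (Nat.cast_nonneg _)

lemma chainDensity_le_one (ℱ : Finset (Finset α)) (j : ℕ) (X : Finset α) :
    chainDensity ℱ j X ≤ 1 := by
  induction j generalizing X with
  | zero => exact le_rfl
  | succ j ih =>
    refine div_le_one_of_le₀ ((sum_le_card_nsmul _ _ 1 fun A _ => ih A).trans ?_)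
      (Nat.cast_nonneg _)
    rw [nsmul_one]
    exact_mod_cast card_filter_le _ _

variable [Fintype α]

/-- The total `μ`-weight of the subsets of `X`. -/
def downWeight (μ : Finset α → ℝ) (X : Finset α) : ℝ := ∑ B with B ⊆ X, μ B

lemma downWeight_le_sum {μ : Finset α → ℝ} (hμ : ∀ B, 0 ≤ μ B) (X : Finset α) :
    downWeight μ X ≤ ∑ B, μ B :=
  sum_le_univ_sum_of_nonneg hμ

lemma sum_downWeight {ι : Type*} (s : Finset ι) (f : ι → Finset α) (μ : Finset α → ℝ) :
    ∑ i ∈ s, downWeight μ (f i) = ∑ B, μ B * #{i ∈ s | B ⊆ f i} := by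
  simp only [downWeight, sum_filter]
  rw [sum_comm]
  refine sum_congr rfl fun B _ => ?_
  rw [← sum_filter, sum_const, nsmul_eq_mul, mul_comm]

lemma pow_sum_mul_le_sum_mul_pow {ι : Type*} {s : Finset ι} {μ w : ι → ℝ}
    (hμ : ∀ i ∈ s, 0 ≤ μ i) (hμs : ∑ i ∈ s, μ i ≤ 1) (hw : ∀ i ∈ s, 0 ≤ w i) {t : ℕ}
    (ht : t ≠ 0) :
    (∑ i ∈ s, μ i * w i) ^ t ≤ ∑ i ∈ s, μ i * w i ^ t := by
  have jensen := (convexOn_pow (𝕜 := ℝ) t).map_add_sum_le hμ (sub_add_cancel 1 _)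
    (fun i hi => hw i hi) (sub_nonneg.2 hμs) Set.self_mem_Ici
  simpa only [smul_eq_mul, mul_zero, zero_add, zero_pow ht] using jensen

lemma card_filter_card_lt_card_inf_add_le {X : Finset α} {𝒢 : Finset (Finset α)}
    (h𝒢 : ∀ A ∈ 𝒢, A ⊆ X) {t : ℕ} (ht : t ≠ 0) (s : ℕ) :
    #{a ∈ Fintype.piFinset fun _ : Fin t => 𝒢 | #X < #(univ.inf a) + s} ≤
      2 ^ Fintype.card α * (2 ^ s) ^ t := by
  have cover : {a ∈ Fintype.piFinset fun _ : Fin t => 𝒢 | #X < #(univ.inf a) + s} ⊆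
      ({U | U ⊆ X ∧ #X < #U + s} : Finset (Finset α)).biUnion
        fun U => Fintype.piFinset fun _ : Fin t => Icc U X := by
    intro a ha
    obtain ⟨ha𝒢, ha⟩ := mem_filter.1 ha
    have haX i : a i ⊆ X := h𝒢 _ (Fintype.mem_piFinset.1 ha𝒢 i)
    have hinf i : univ.inf a ⊆ a i := inf_le (mem_univ i)
    simp only [mem_biUnion, mem_filter_univ, Fintype.mem_piFinset, mem_Icc]
    exact ⟨univ.inf a, ⟨(hinf ⟨0, ht.bot_lt⟩).trans (haX _), ha⟩, fun i => ⟨hinf i, haX i⟩⟩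
  have fiber : ∀ U ∈ ({U | U ⊆ X ∧ #X < #U + s} : Finset (Finset α)),
      #(Fintype.piFinset fun _ : Fin t => Icc U X) ≤ (2 ^ s) ^ t := by
    intro U hU
    obtain ⟨hUX, hU⟩ := (mem_filter_univ U).1 hU
    rw [Fintype.card_piFinset_const, card_Icc_finset hUX]
    gcongr <;> omega
  calc _ ≤ _ := card_le_card cover
    _ ≤ _ := card_biUnion_le_card_mul _ _ _ fiber
    _ ≤ _ := by gcongr; exact (card_le_univ _).trans_eq Fintype.card_finset

/-- Dependent random choice: `U` is the intersection of `t` random members of `ℱ` below `X`. -/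
lemma exists_card_add_le_le_downWeight {ℱ : Finset (Finset α)} {μ : Finset α → ℝ}
    (hμ : ∀ B, 0 ≤ μ B) (hμs : ∑ B, μ B ≤ 1) {γ : ℝ} (hγ : 0 ≤ γ) {X : Finset α} {t s : ℕ}
    (ht : t ≠ 0) (hX : γ * #ℱ ≤ ∑ A ∈ ℱ with A ⊆ X, downWeight μ A)
    (hs : 2 * 2 ^ Fintype.card α * (2 ^ s) ^ t < (γ * #ℱ) ^ t) :
    ∃ U : Finset α, #U + s ≤ #X ∧ γ ^ t / 2 ≤ downWeight μ U := by
  by_contra! hU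
  set 𝒢 := {A ∈ ℱ | A ⊆ X}
  set tuples := Fintype.piFinset fun _ : Fin t => 𝒢
  have card_pow B : #{A ∈ 𝒢 | B ⊆ A} ^ t = #{a ∈ tuples | B ⊆ univ.inf a} := by
    rw [← Fintype.card_piFinset_const]
    congr 1 with a
    simp only [tuples, Fintype.mem_piFinset, mem_filter, Finset.le_inf_iff,
      mem_univ, forall_const, forall_and]
  have lower : (γ * #ℱ) ^ t ≤ ∑ a ∈ tuples, downWeight μ (univ.inf a) :=
    calc (γ * #ℱ) ^ t ≤ (∑ A ∈ 𝒢, downWeight μ A) ^ t := by gcongr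
      _ = (∑ B, μ B * #{A ∈ 𝒢 | B ⊆ A}) ^ t := by rw [sum_downWeight 𝒢 fun A => A]
      _ ≤ ∑ B, μ B * (#{A ∈ 𝒢 | B ⊆ A} : ℝ) ^ t :=
        pow_sum_mul_le_sum_mul_pow (fun B _ => hμ B) hμs (fun _ _ => Nat.cast_nonneg _) ht
      _ = ∑ B, μ B * #{a ∈ tuples | B ⊆ univ.inf a} := by simp only [← card_pow, Nat.cast_pow]
      _ = _ := (sum_downWeight _ _ _).symm
  have upper : ∑ a ∈ tuples, downWeight μ (univ.inf a) ≤
      2 ^ Fintype.card α * (2 ^ s) ^ t + #ℱ ^ t * (γ ^ t / 2) := by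
    rw [← sum_filter_add_sum_filter_not tuples fun a => #X < #(univ.inf a) + s]
    gcongr
    · refine (sum_le_card_nsmul _ _ 1 fun a _ => (downWeight_le_sum hμ _).trans hμs).trans ?_
      rw [nsmul_one]
      exact_mod_cast card_filter_card_lt_card_inf_add_le (fun A hA => (mem_filter.1 hA).2) ht s
    · refine (sum_le_card_nsmul _ _ (γ ^ t / 2) fun a ha =>
        (hU _ (not_lt.1 (mem_filter.1 ha).2)).le).trans ?_
      rw [nsmul_eq_mul]
      gcongr
      rw [← Nat.cast_pow, Nat.cast_le]
      calc _ ≤ #tuples := card_filter_le _ _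
        _ = #𝒢 ^ t := Fintype.card_piFinset_const _ _
        _ ≤ #ℱ ^ t := by gcongr; exact filter_subset _ _
  rw [mul_pow] at hs lower
  linarith

lemma exists_chainDensity_eq_downWeight (ℱ : Finset (Finset α)) (j : ℕ) :
    ∃ μ : Finset α → ℝ, (∀ B, 0 ≤ μ B) ∧ ∑ B, μ B ≤ 1 ∧
      ∀ X, chainDensity ℱ j X = downWeight μ X := by
  cases j with
  | zero =>
    refine ⟨Pi.single ∅ 1, fun B => ?_, ?_, fun X => ?_⟩
    · exact (Pi.single_nonneg.2 zero_le_one : (0 : Finset α → ℝ) ≤ _) B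
    · simp
    · simp [chainDensity, downWeight, Pi.single_apply]
  | succ j =>
    refine ⟨fun B => if B ∈ ℱ then chainDensity ℱ j B / #ℱ else 0, fun B => ?_, ?_, fun X => ?_⟩
    · dsimp only
      split_ifs
      exacts [div_nonneg (chainDensity_nonneg _ _ _) (Nat.cast_nonneg _), le_rfl]
    · rw [sum_ite_mem, univ_inter, ← sum_div]
      refine div_le_one_of_le₀ ((sum_le_card_nsmul _ _ 1 fun A _ =>
        chainDensity_le_one _ _ A).trans_eq (nsmul_one _)) (Nat.cast_nonneg _)
    · rw [chainDensity, downWeight, ← sum_filter, filter_filter, sum_div]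
      congr 1 with B
      simp [and_comm]

lemma exists_card_add_le_le_chainDensity {ℱ : Finset (Finset α)} {γ : ℝ} (hγ : 0 ≤ γ)
    {X : Finset α} {j t s : ℕ} (ht : t ≠ 0) (hX : γ ≤ chainDensity ℱ (j + 1) X)
    (hs : 2 * 2 ^ Fintype.card α * (2 ^ s) ^ t < (γ * #ℱ) ^ t) :
    ∃ U : Finset α, #U + s ≤ #X ∧ γ ^ t / 2 ≤ chainDensity ℱ j U := by
  obtain ⟨μ, hμ, hμs, density_eq⟩ := exists_chainDensity_eq_downWeight ℱ j
  have hℱ : (0 : ℝ) < #ℱ := by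
    refine (Nat.cast_nonneg _).lt_of_ne' fun h => ?_
    rw [h, mul_zero, zero_pow ht] at hs
    exact hs.not_ge (by positivity)
  simp only [density_eq]
  refine exists_card_add_le_le_downWeight hμ hμs hγ ht ?_ hs
  simpa only [chainDensity, density_eq, le_div_iff₀ hℱ] using hX

lemma eventually_two_mul_two_pow_mul_lt (k : ℕ) {γ : ℝ} (hγ : 0 < γ) :
    ∀ᶠ ℓ : ℕ in atTop, 2 * 2 ^ (k * ℓ) * (2 ^ (k * ℓ / (k + 1) + 1)) ^ (k + 1) ^ 2 <
      (γ * 2 ^ ℓ) ^ (k + 1) ^ 2 := by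
  set t := (k + 1) ^ 2
  filter_upwards [(tendsto_pow_atTop_atTop_of_one_lt (one_lt_two (α := ℝ))).eventually_gt_atTop
    (2 ^ (t + 1) / γ ^ t)] with ℓ hℓ
  set s := k * ℓ / (k + 1) + 1
  have exponents : k * ℓ + s * t + ℓ ≤ ℓ * t + t := by
    have : k * ℓ / (k + 1) * (k + 1) ≤ k * ℓ := Nat.div_mul_le_self _ _
    simp only [s, t]
    nlinarith
  refine lt_of_mul_lt_mul_right ?_ (by positivity : (0 : ℝ) ≤ 2 ^ ℓ)
  calc (2 * 2 ^ (k * ℓ) * (2 ^ s) ^ t * 2 ^ ℓ : ℝ) = 2 * 2 ^ (k * ℓ + s * t + ℓ) := by ring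
    _ ≤ 2 * 2 ^ (ℓ * t + t) := by gcongr; norm_num
    _ = 2 ^ (t + 1) * (2 ^ ℓ) ^ t := by ring
    _ < 2 ^ ℓ * γ ^ t * (2 ^ ℓ) ^ t := by gcongr; rwa [← div_lt_iff₀ (by positivity)]
    _ = (γ * 2 ^ ℓ) ^ t * 2 ^ ℓ := by ring

end ChainDensity

lemma eventually_mul_le_card_of_le_chainDensity (k j : ℕ) {γ : ℝ} (hγ : 0 < γ) :
    ∀ᶠ ℓ : ℕ in atTop, ∀ (α : Type u) [Fintype α] [DecidableEq α], Fintype.card α = k * ℓ →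
      ∀ ℱ : Finset (Finset α), 2 ^ ℓ ≤ #ℱ → ∀ X, γ ≤ chainDensity ℱ j X →
        j * (k * ℓ / (k + 1) + 1) ≤ #X := by
  induction j generalizing γ with
  | zero => simp
  | succ j ih =>
    filter_upwards [eventually_two_mul_two_pow_mul_lt k hγ,
      ih (γ := γ ^ (k + 1) ^ 2 / 2) (by positivity)] with ℓ hℓ ih α _ _ hα ℱ hℱ X hX
    have hs : 2 * 2 ^ Fintype.card α * (2 ^ (k * ℓ / (k + 1) + 1)) ^ (k + 1) ^ 2 <
        (γ * #ℱ) ^ (k + 1) ^ 2 := by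
      rw [hα]
      refine hℓ.trans_le ?_
      gcongr
      exact_mod_cast hℱ
    obtain ⟨U, hUX, hU⟩ := exists_card_add_le_le_chainDensity hγ.le (by positivity) hX hs
    rw [add_one_mul]
    exact (Nat.add_le_add_right (ih α hα ℱ hℱ U hU) _).trans hUX

/-! ### Layers and almost towers -/

section Relation

variable {V W : Type*} (r : V → W → Prop) [∀ v, DecidablePred (r v)]

lemma card_interedges_eq_sum_left (s : Finset V) (t : Finset W) :
    #(interedges r s t) = ∑ v ∈ s, #{w ∈ t | r v w} := by
  simp only [interedges, card_filter, sum_product]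

lemma card_interedges_eq_sum_right (s : Finset V) (t : Finset W) :
    #(interedges r s t) = ∑ w ∈ t, #{v ∈ s | r v w} := by
  simp only [interedges, card_filter, sum_product_right]

end Relation

section DegreeCore

variable {V : Type*} (r : V → V → Prop) [∀ v, DecidablePred (r v)] (S : Finset V) (g : ℝ)

/-- The `j`-th core of `S`: each core consists of the elements of the preceding one that are
related to at least `g` of its elements. -/
noncomputable def degreeCore : ℕ → Finset V
  | 0 => S
  | j + 1 => {v ∈ degreeCore j | g ≤ #{w ∈ degreeCore j | r v w}}

lemma degreeCore_succ_subset (j : ℕ) : degreeCore r S g (j + 1) ⊆ degreeCore r S g j :=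
  filter_subset _ _

lemma degreeCore_antitone : Antitone (degreeCore r S g) :=
  antitone_nat_of_succ_le (degreeCore_succ_subset r S g)

lemma degreeCore_subset (j : ℕ) : degreeCore r S g j ⊆ S :=
  degreeCore_antitone r S g j.zero_le

variable [DecidableEq V]

/-- The elements removed in the passage from the `j`-th core to the next one. -/
noncomputable def degreeLayer (j : ℕ) : Finset V := degreeCore r S g j \ degreeCore r S g (j + 1)

lemma degreeLayer_subset (j : ℕ) : degreeLayer r S g j ⊆ S :=
  sdiff_subset.trans (degreeCore_subset r S g j)

lemma disjoint_degreeLayer {i j : ℕ} (hij : i < j) :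
    Disjoint (degreeLayer r S g i) (degreeLayer r S g j) :=
  disjoint_sdiff_self_left.mono_right
    (sdiff_subset.trans (degreeCore_antitone r S g (Nat.succ_le_of_lt hij)))

lemma sum_degreeLayer_add_sum_degreeCore {M : Type*} [AddCommMonoid M] (f : V → M) (j : ℕ) :
    ∑ i ∈ range j, ∑ v ∈ degreeLayer r S g i, f v + ∑ v ∈ degreeCore r S g j, f v =
      ∑ v ∈ S, f v := by
  induction j with
  | zero => simp [degreeCore]
  | succ j ih =>
    rw [← ih, sum_range_succ, add_assoc, degreeLayer,
      sum_sdiff (degreeCore_succ_subset r S g j)]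

lemma sum_card_degreeLayer_add_card_degreeCore (j : ℕ) :
    ∑ i ∈ range j, #(degreeLayer r S g i) + #(degreeCore r S g j) = #S := by
  simpa only [card_eq_sum_ones] using sum_degreeLayer_add_sum_degreeCore r S g (fun _ => 1) j

lemma card_interedges_degreeLayer_degreeCore_le (j : ℕ) :
    (#(interedges r (degreeLayer r S g j) (degreeCore r S g j)) : ℝ) ≤
      #(degreeLayer r S g j) * g := by
  rw [card_interedges_eq_sum_left, Nat.cast_sum, ← nsmul_eq_mul]
  refine sum_le_card_nsmul _ _ _ fun v hv => ?_
  obtain ⟨hv, hv'⟩ := mem_sdiff.1 hv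
  by_contra! hg
  exact hv' (mem_filter.2 ⟨hv, hg.le⟩)

lemma card_interedges_degreeLayer_le (j : ℕ) :
    (#(interedges r (degreeLayer r S g j) S) : ℝ) ≤
      ∑ i ∈ range j, (#(interedges r (degreeLayer r S g j) (degreeLayer r S g i)) : ℝ) +
        #(degreeLayer r S g j) * g := by
  have split : ∑ i ∈ range j, #(interedges r (degreeLayer r S g j) (degreeLayer r S g i)) +
      #(interedges r (degreeLayer r S g j) (degreeCore r S g j)) =
        #(interedges r (degreeLayer r S g j) S) := by
    simpa only [card_interedges_eq_sum_right] using sum_degreeLayer_add_sum_degreeCore r S g _ j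
  rw [← split]
  push_cast
  gcongr
  exact card_interedges_degreeLayer_degreeCore_le r S g j

lemma card_interedges_self_le {g : ℝ} (hg : 0 ≤ g) (k : ℕ) :
    (#(interedges r S S) : ℝ) ≤
      ∑ j ∈ range k, ∑ i ∈ range j,
        (#(interedges r (degreeLayer r S g j) (degreeLayer r S g i)) : ℝ) +
      #S * (g + #(degreeCore r S g k)) := by
  have split : ∑ j ∈ range k, #(interedges r (degreeLayer r S g j) S) +
      #(interedges r (degreeCore r S g k) S) = #(interedges r S S) := by
    simpa only [card_interedges_eq_sum_left] using sum_degreeLayer_add_sum_degreeCore r S g _ k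
  have layers : ∑ j ∈ range k, (#(degreeLayer r S g j) : ℝ) ≤ #S := by
    rw [← sum_card_degreeLayer_add_card_degreeCore r S g k]
    push_cast
    exact le_add_of_nonneg_right (Nat.cast_nonneg _)
  have core : (#(interedges r (degreeCore r S g k) S) : ℝ) ≤ #S * #(degreeCore r S g k) := by
    rw [mul_comm]
    exact_mod_cast card_interedges_le_mul r _ _
  calc (#(interedges r S S) : ℝ)
      = ∑ j ∈ range k, (#(interedges r (degreeLayer r S g j) S) : ℝ) +
        #(interedges r (degreeCore r S g k) S) := by rw [← split]; push_cast; rfl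
    _ ≤ ∑ j ∈ range k, (∑ i ∈ range j,
          (#(interedges r (degreeLayer r S g j) (degreeLayer r S g i)) : ℝ) +
            #(degreeLayer r S g j) * g) + #S * #(degreeCore r S g k) := by
      gcongr with j
      exact card_interedges_degreeLayer_le r S g j
    _ ≤ _ := by
      rw [sum_add_distrib, ← sum_mul, mul_add, ← add_assoc]
      gcongr

lemma sum_range_sum_range_mul {R : Type*} [CommRing R] (l : ℕ → R) (k : ℕ) :
    2 * ∑ j ∈ range k, ∑ i ∈ range j, l j * l i =
      (∑ j ∈ range k, l j) ^ 2 - ∑ j ∈ range k, l j ^ 2 := by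
  induction k with
  | zero => simp
  | succ k ih =>
    rw [sum_range_succ, mul_add, ih, ← mul_sum, sum_range_succ, sum_range_succ]
    ring

/-- Here `l j` stands for the size of the `j`-th layer and `E` for the number of unrelated pairs
between layers. -/
lemma sum_sq_sub_add_le {l : ℕ → ℝ} {γ N E : ℝ} {k : ℕ} (hγ : 0 ≤ γ) (hγ1 : γ ≤ 1) (hk : 2 ≤ k)
    (hN : 1 ≤ N) (hγN : 2 ≤ γ * k * N) (hl : ∑ j ∈ range k, l j ≤ k * N - k + 1)
    (hl' : (1 - γ) * (k * N - k + 1) ≤ ∑ j ∈ range k, l j)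
    (hE : k * (k - 1) / 2 * (N - 1) ^ 2 + E ≤
      ∑ j ∈ range k, ∑ i ∈ range j, l j * l i + 2 * γ * (k * N - k + 1) ^ 2) :
    ∑ j ∈ range k, (l j - N) ^ 2 + 2 * E ≤ 6 * γ * k ^ 2 * N ^ 2 := by
  have hk' : (2 : ℝ) ≤ k := by exact_mod_cast hk
  have hpairs := sum_range_sum_range_mul l k
  have hsq : ∑ j ∈ range k, (l j - N) ^ 2 =
      ∑ j ∈ range k, l j ^ 2 - 2 * N * ∑ j ∈ range k, l j + k * N ^ 2 := by
    simp only [sub_sq, sum_add_distrib, sum_sub_distrib, mul_assoc, mul_sum, sum_const, card_range,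
      nsmul_eq_mul, mul_comm N]
  set s := ∑ j ∈ range k, l j
  set m := (k : ℝ) * N - k + 1 with hm
  have hm0 : 0 ≤ m := by nlinarith
  have hmN : m ≤ k * N := by linarith
  have hs : s ^ 2 ≤ m ^ 2 := by
    have : 0 ≤ s := hl'.trans' (mul_nonneg (sub_nonneg.2 hγ1) hm0)
    gcongr
  have hmsq : m ^ 2 ≤ k ^ 2 * N ^ 2 := by rw [← mul_pow]; gcongr
  have hγm : γ * m ^ 2 ≤ γ * (k ^ 2 * N ^ 2) := by gcongr
  have hNs : 2 * N * ((1 - γ) * m) ≤ 2 * N * s := by gcongr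
  have hNm : 2 * N * (γ * m) ≤ 2 * N * (γ * (k * N)) := by gcongr
  have hkN : 2 * (k * N) ≤ γ * k * N * (k * N) := by gcongr
  have hγk : 2 * (γ * k * N ^ 2) ≤ k * (γ * k * N ^ 2) := by gcongr
  have hdiff : m ^ 2 - k * (k - 1) * (N - 1) ^ 2 ≤ k * N ^ 2 := by rw [hm]; nlinarith
  have hkNm : 2 * N * (k * N - m) ≤ 2 * N * k := by gcongr; linarith
  linarith [hdiff, hkNm]

lemma sum_sq_card_degreeLayer_sub_add_le {γ N : ℝ} {k : ℕ} (hγ : 0 ≤ γ) (hγ1 : γ ≤ 1)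
    (hk : 2 ≤ k) (hN : 1 ≤ N) (hγN : 2 ≤ γ * k * N) (hS : (#S : ℝ) = k * N - k + 1)
    (hcore : #(degreeCore r S (γ * #S) k) ≤ γ * #S)
    (hr : (k * (k - 1) / 2 * (N - 1) ^ 2 : ℝ) ≤ #(interedges r S S)) :
    ∑ j ∈ range k, ((#(degreeLayer r S (γ * #S) j) : ℝ) - N) ^ 2 +
      2 * ∑ j ∈ range k, ∑ i ∈ range j, (#(interedges (fun v w => ¬r v w)
        (degreeLayer r S (γ * #S) j) (degreeLayer r S (γ * #S) i)) : ℝ) ≤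
      6 * γ * k ^ 2 * N ^ 2 := by
  have hsum : ∑ j ∈ range k, (#(degreeLayer r S (γ * #S) j) : ℝ) +
      #(degreeCore r S (γ * #S) k) = #S := by
    exact_mod_cast sum_card_degreeLayer_add_card_degreeCore r S (γ * #S) k
  have hpairs := card_interedges_self_le r S (g := γ * #S) (by positivity) k
  have compl (s t : Finset V) : (#(interedges r s t) : ℝ) =
      #s * #t - #(interedges (fun v w => ¬r v w) s t) := by
    rw [eq_sub_iff_add_eq]
    exact_mod_cast card_interedges_add_card_interedges_compl r s t
  simp only [compl (degreeLayer _ _ _ _), sum_sub_distrib] at hpairs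
  have hcore' : (#S : ℝ) * (γ * #S + #(degreeCore r S (γ * #S) k)) ≤ #S * (γ * #S + γ * #S) := by
    gcongr
  refine sum_sq_sub_add_le hγ hγ1 hk hN hγN ?_ ?_ ?_ <;> rw [← hS]
  · exact (le_add_of_nonneg_right (Nat.cast_nonneg _)).trans_eq hsum
  · linarith
  · linarith

end DegreeCore

section ChainCore

variable {α : Type u} [DecidableEq α]

lemma mul_le_chainDensity_succ {ℱ 𝒢 : Finset (Finset α)} (hℱ : ℱ.Nonempty) (h𝒢 : 𝒢 ⊆ ℱ)
    {X : Finset α} (hX : ∀ A ∈ 𝒢, A ⊆ X) {γ β : ℝ} (h𝒢γ : γ * #ℱ ≤ #𝒢) (hβ : 0 ≤ β) {j : ℕ}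
    (hβj : ∀ A ∈ 𝒢, β ≤ chainDensity ℱ j A) : γ * β ≤ chainDensity ℱ (j + 1) X := by
  rw [chainDensity, le_div_iff₀ (by exact_mod_cast hℱ.card_pos)]
  calc γ * β * #ℱ = γ * #ℱ * β := by ring
    _ ≤ #𝒢 * β := by gcongr
    _ = #𝒢 • β := (nsmul_eq_mul _ _).symm
    _ ≤ ∑ A ∈ 𝒢, chainDensity ℱ j A := card_nsmul_le_sum _ _ _ hβj
    _ ≤ ∑ A ∈ ℱ with A ⊆ X, chainDensity ℱ j A :=
      sum_le_sum_of_subset_of_nonneg (fun A hA => mem_filter.2 ⟨h𝒢 hA, hX A hA⟩)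
        fun A _ _ => chainDensity_nonneg ℱ j A

lemma pow_le_chainDensity_of_mem_degreeCore {ℱ : Finset (Finset α)} {γ : ℝ} (hγ : 0 ≤ γ) {j : ℕ}
    {A : Finset α} (hA : A ∈ degreeCore (· ⊃ ·) ℱ (γ * #ℱ) j) : γ ^ j ≤ chainDensity ℱ j A := by
  induction j generalizing A with
  | zero => exact (pow_zero γ).le
  | succ j ih =>
    rw [pow_succ']
    exact mul_le_chainDensity_succ ⟨A, degreeCore_subset _ _ _ _ hA⟩
      ((filter_subset _ _).trans (degreeCore_subset _ _ _ _)) (fun B hB => (mem_filter.1 hB).2.1)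
      (mem_filter.1 hA).2 (by positivity) fun B hB => ih (mem_filter.1 hB).1

end ChainCore

lemma eventually_card_degreeCore_lt (k : ℕ) {γ : ℝ} (hγ : 0 < γ) :
    ∀ᶠ ℓ : ℕ in atTop, ∀ (α : Type u) [Fintype α] [DecidableEq α], Fintype.card α = k * ℓ →
      ∀ ℱ : Finset (Finset α), 2 ^ ℓ ≤ #ℱ →
        (#(degreeCore (· ⊃ ·) ℱ (γ * #ℱ) k) : ℝ) < γ * #ℱ := by
  filter_upwards [eventually_mul_le_card_of_le_chainDensity (k := k) (j := k + 1)
    (pow_pos hγ (k + 1))] with ℓ hℓ α _ _ hα ℱ hℱ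
  by_contra! hcore
  have density : γ ^ (k + 1) ≤ chainDensity ℱ (k + 1) univ := by
    rw [pow_succ']
    exact mul_le_chainDensity_succ (card_pos.1 (hℱ.trans_lt' (by positivity)))
      (degreeCore_subset _ _ _ _) (fun A _ => subset_univ A) hcore (by positivity)
      fun A hA => pow_le_chainDensity_of_mem_degreeCore hγ.le hA
  have := hℓ α hα ℱ hℱ univ density
  rw [card_univ, hα] at this
  exact (Nat.lt_mul_div_succ (k * ℓ) k.succ_pos).not_ge this

section Prune

variable {V W ι : Type*}

lemma card_filter_lt_card_mul_le_card_interedges (r : V → W → Prop) [∀ v, DecidablePred (r v)]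
    (S : Finset V) (T : Finset W) (δ : ℝ) :
    #{v ∈ S | δ < #{w ∈ T | r v w}} * δ ≤ #(interedges r S T) := by
  rw [card_interedges_eq_sum_left, Nat.cast_sum, ← nsmul_eq_mul]
  calc _ ≤ ∑ v ∈ S with δ < #{w ∈ T | r v w}, (#{w ∈ T | r v w} : ℝ) :=
        card_nsmul_le_sum _ _ _ fun v hv => (mem_filter.1 hv).2.le
    _ ≤ _ := sum_le_sum_of_subset_of_nonneg (filter_subset _ _) fun _ _ _ => Nat.cast_nonneg _

lemma card_interedges_swap (r : V → W → Prop) [∀ v, DecidablePred (r v)]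
    (S : Finset V) (T : Finset W) :
    #(interedges (fun w v => r v w) T S) = #(interedges r S T) := by
  rw [card_interedges_eq_sum_left, card_interedges_eq_sum_right]

lemma exists_subset_card_filter_le (L : ι → Finset V) (q : ι → ι → V → V → Prop)
    [∀ i j v, DecidablePred (q i j v)] {s : Finset ι} {E δ : ℝ} (hδ : 0 < δ)
    (hE : ∀ i ∈ s, ∀ j ∈ s, #(interedges (q i j) (L i) (L j)) ≤ E) :
    ∃ P : ι → Finset V, (∀ i, P i ⊆ L i) ∧ (∀ i ∈ s, (#(L i) : ℝ) ≤ #(P i) + #s * (E / δ)) ∧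
      ∀ i, ∀ j ∈ s, ∀ v ∈ P i, (#{w ∈ P j | q i j v w} : ℝ) ≤ δ := by
  classical
  set P : ι → Finset V := fun i => {v ∈ L i | ∀ j ∈ s, (#{w ∈ L j | q i j v w} : ℝ) ≤ δ}
  have hPL i : P i ⊆ L i := filter_subset _ _
  refine ⟨P, hPL, fun i hi => ?_, fun i j hj v hv => ?_⟩
  · have cover : L i ⊆ P i ∪ s.biUnion fun j => {v ∈ L i | δ < #{w ∈ L j | q i j v w}} := by
      intro v hv
      by_cases hvP : v ∈ P i
      · exact mem_union_left _ hvP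
      · obtain ⟨j, hj, hjv⟩ : ∃ j ∈ s, δ < #{w ∈ L j | q i j v w} := by
          simpa only [P, mem_filter, hv, true_and, not_forall, not_le, exists_prop] using hvP
        exact mem_union_right _ (mem_biUnion.2 ⟨j, hj, mem_filter.2 ⟨hv, hjv⟩⟩)
    have bad : ∑ j ∈ s, (#{v ∈ L i | δ < #{w ∈ L j | q i j v w}} : ℝ) ≤ #s * (E / δ) := by
      rw [← nsmul_eq_mul]
      refine sum_le_card_nsmul _ _ _ fun j hj => (le_div_iff₀ hδ).2 ?_
      exact (card_filter_lt_card_mul_le_card_interedges _ _ _ _).trans (hE i hi j hj)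
    calc (#(L i) : ℝ) ≤ #(P i) + ∑ j ∈ s, (#{v ∈ L i | δ < #{w ∈ L j | q i j v w}} : ℝ) := by
          exact_mod_cast (card_le_card cover).trans
            ((card_union_le _ _).trans (Nat.add_le_add_left card_biUnion_le _))
      _ ≤ _ := by gcongr
  · refine le_trans ?_ ((mem_filter.1 hv).2 j hj)
    exact_mod_cast card_le_card (filter_subset_filter _ (hPL j))

lemma exists_subset_card_filter_le_of_lt (L : ℕ → Finset V) (r : V → V → Prop)
    [DecidableRel r] {k : ℕ} {E δ : ℝ} (hδ : 0 < δ) (hE0 : 0 ≤ E)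
    (hE : ∀ i j, i < j → j < k → #(interedges r (L j) (L i)) ≤ E) :
    ∃ P : ℕ → Finset V, (∀ i, P i ⊆ L i) ∧ (∀ i < k, (#(L i) : ℝ) ≤ #(P i) + k * (E / δ)) ∧
      ∀ i j, i < j → j < k → (∀ w ∈ P i, (#{v ∈ P j | r v w} : ℝ) ≤ δ) ∧
        ∀ v ∈ P j, (#{w ∈ P i | r v w} : ℝ) ≤ δ := by
  obtain ⟨P, hPL, hcard, hfew⟩ := exists_subset_card_filter_le L
    (fun i j v w => j < i ∧ r v w ∨ i < j ∧ r w v) (s := range k) hδ fun i hi j hj => by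
      rcases lt_trichotomy i j with hij | rfl | hij
      · simp only [hij.not_gt, hij, false_and, true_and, false_or]
        rw [card_interedges_swap r]
        exact hE i j hij (mem_range.1 hj)
      · simpa [interedges] using hE0
      · simp only [hij.not_gt, hij, false_and, true_and, or_false]
        exact hE j i hij (mem_range.1 hi)
  rw [card_range] at hcard
  refine ⟨P, hPL, fun i hi => hcard i (mem_range.2 hi), fun i j hij hj => ⟨fun w hw => ?_,
    fun v hv => ?_⟩⟩
  · simpa only [hij.not_gt, hij, false_and, true_and, false_or] using
      hfew i j (mem_range.2 hj) w hw
  · simpa only [hij.not_gt, hij, false_and, true_and, or_false] using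
      hfew j i (mem_range.2 (hij.trans hj)) v hv

end Prune

lemma le_sum_range_sum_range {f : ℕ → ℕ → ℝ} (hf : ∀ j i, 0 ≤ f j i) {i j k : ℕ} (hij : i < j)
    (hj : j < k) : f j i ≤ ∑ j ∈ range k, ∑ i ∈ range j, f j i :=
  (single_le_sum (fun i _ => hf j i) (mem_range.2 hij)).trans
    (single_le_sum (f := fun j => ∑ i ∈ range j, f j i) (fun j _ => sum_nonneg fun i _ => hf j i)
      (mem_range.2 hj))

/-- Families `P 0, …, P (k - 1)` resembling the cubes of a tower of `k` cubes with `N` elements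
each: up to a few exceptions, the members of `P i` lie below those of `P j` whenever `i < j`. -/
structure IsAlmostTower {α : Type*} [DecidableEq α] (k : ℕ) (N : ℝ)
    (P : ℕ → Finset (Finset α)) : Prop where
  disjoint : ∀ i j, i < j → Disjoint (P i) (P j)
  le_card : ∀ i < k, (1 - 1 / (16 * k)) * N ≤ #(P i)
  card_not_above_le : ∀ i j, i < j → j < k → ∀ A ∈ P i, (#{B ∈ P j | ¬A ⊂ B} : ℝ) ≤ N / 64
  card_not_below_le : ∀ i j, i < j → j < k → ∀ B ∈ P j, (#{A ∈ P i | ¬A ⊂ B} : ℝ) ≤ N / 64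

lemma exists_isAlmostTower_of_sum_le {α : Type*} [DecidableEq α] {k : ℕ} (hk : k ≠ 0) {N : ℝ}
    (hN : 0 < N) {L : ℕ → Finset (Finset α)} (hL : ∀ i j, i < j → Disjoint (L i) (L j))
    (hsum : ∑ j ∈ range k, (#(L j) - N) ^ 2 + 2 * ∑ j ∈ range k, ∑ i ∈ range j,
      (#(interedges (fun A B => ¬B ⊂ A) (L j) (L i)) : ℝ) ≤ N ^ 2 / (1024 * k ^ 2)) :
    ∃ P : ℕ → Finset (Finset α), (∀ i, P i ⊆ L i) ∧ IsAlmostTower k N P := by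
  set f : ℕ → ℕ → ℝ := fun j i => #(interedges (fun A B => ¬B ⊂ A) (L j) (L i))
  set E := ∑ j ∈ range k, ∑ i ∈ range j, f j i
  have hf0 j i : 0 ≤ f j i := Nat.cast_nonneg _
  have hE0 : 0 ≤ E := sum_nonneg fun _ _ => sum_nonneg fun _ _ => hf0 _ _
  have hsq0 : 0 ≤ ∑ j ∈ range k, ((#(L j) : ℝ) - N) ^ 2 := sum_nonneg fun _ _ => sq_nonneg _
  obtain ⟨P, hPL, hcard, hfew⟩ := exists_subset_card_filter_le_of_lt L (fun A B => ¬B ⊂ A)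
    (δ := N / 64) (by positivity) hE0 fun i j hij hj => le_sum_range_sum_range hf0 hij hj
  refine ⟨P, hPL, fun i j hij => (hL i j hij).mono (hPL i) (hPL j), fun i hi => ?_,
    fun i j hij hj => (hfew i j hij hj).1, fun i j hij hj => (hfew i j hij hj).2⟩
  have hLi : N - N / (32 * k) ≤ #(L i) := by
    have : ((#(L i) : ℝ) - N) ^ 2 ≤ (N / (32 * k)) ^ 2 :=
      calc ((#(L i) : ℝ) - N) ^ 2 ≤ ∑ j ∈ range k, ((#(L j) : ℝ) - N) ^ 2 :=
            single_le_sum (f := fun j => ((#(L j) : ℝ) - N) ^ 2) (fun _ _ => sq_nonneg _)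
              (mem_range.2 hi)
        _ ≤ N ^ 2 / (1024 * k ^ 2) := by linarith
        _ = (N / (32 * k)) ^ 2 := by ring
    linarith [neg_le_of_abs_le (abs_le_of_sq_le_sq this (by positivity))]
  have hkE : (k : ℝ) * (E / (N / 64)) ≤ N / (32 * k) :=
    calc (k : ℝ) * (E / (N / 64)) ≤ k * (N ^ 2 / (1024 * k ^ 2) / 2 / (N / 64)) := by
          gcongr
          linarith
      _ = N / (32 * k) := by field_simp; norm_num
  calc (1 - 1 / (16 * k)) * N = N - N / (32 * k) - N / (32 * k) := by ring
    _ ≤ #(P i) := by linarith [hcard i hi]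

lemma eventually_exists_isAlmostTower {k : ℕ} (hk : 2 ≤ k) :
    ∀ᶠ ℓ : ℕ in atTop, ∀ (α : Type u) [Fintype α] [DecidableEq α], Fintype.card α = k * ℓ →
      ∀ ℱ : Finset (Finset α), #ℱ = k * (2 ^ ℓ - 1) + 1 →
        k.choose 2 * (2 ^ ℓ - 1) ^ 2 ≤ #(interedges (· ⊃ ·) ℱ ℱ) →
          ∃ P : ℕ → Finset (Finset α), (∀ i, P i ⊆ ℱ) ∧ IsAlmostTower k (2 ^ ℓ) P := by
  have hk' : (2 : ℝ) ≤ k := by exact_mod_cast hk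
  set γ : ℝ := 1 / (6144 * k ^ 4) with hγ
  have hγ0 : 0 < γ := by positivity
  have hγ1 : γ ≤ 1 := by
    have : (1 : ℝ) ≤ k ^ 4 := one_le_pow₀ (by linarith)
    exact div_le_one_of_le₀ (by linarith) (by positivity)
  filter_upwards [eventually_card_degreeCore_lt.{u} k hγ0,
    (tendsto_pow_atTop_atTop_of_one_lt (one_lt_two (α := ℝ))).eventually_ge_atTop (2 / (γ * k))]
    with ℓ hcore hℓ α _ _ hα ℱ hcard hpairs
  have hN : (1 : ℝ) ≤ 2 ^ ℓ := one_le_pow₀ one_le_two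
  have hcardR : (#ℱ : ℝ) = k * 2 ^ ℓ - k + 1 := by
    rw [hcard]
    push_cast [Nat.one_le_two_pow]
    ring
  have hle : 2 ^ ℓ ≤ #ℱ := by
    rify
    nlinarith
  have hpairsR : (k * (k - 1) / 2 * (2 ^ ℓ - 1) ^ 2 : ℝ) ≤ #(interedges (· ⊃ ·) ℱ ℱ) := by
    have : ((k.choose 2 * (2 ^ ℓ - 1) ^ 2 : ℕ) : ℝ) ≤ #(interedges (· ⊃ ·) ℱ ℱ) :=
      Nat.cast_le.2 hpairs
    simpa [Nat.cast_choose_two, Nat.one_le_two_pow] using this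
  have hlayers := sum_sq_card_degreeLayer_sub_add_le (fun A B : Finset α => A ⊃ B) ℱ hγ0.le hγ1 hk
    hN ((div_le_iff₀' (by positivity)).1 hℓ) hcardR (hcore α hα ℱ hle).le hpairsR
  rw [show 6 * γ * k ^ 2 * (2 ^ ℓ) ^ 2 = ((2 : ℝ) ^ ℓ) ^ 2 / (1024 * k ^ 2) by
    rw [hγ]; field_simp; norm_num] at hlayers
  obtain ⟨P, hP, hPtower⟩ := exists_isAlmostTower_of_sum_le (by omega) (by positivity)
    (fun i j => disjoint_degreeLayer _ _ _) hlayers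
  exact ⟨P, fun i => (hP i).trans (degreeLayer_subset _ _ _ i), hPtower⟩

/-! ### From almost towers to towers -/

section FreeCoords

variable {α : Type*} [DecidableEq α]

/-- The elements on which the members of `𝒜` disagree, that is, the directions of the smallest cube
containing `𝒜`. -/
def freeCoords [Fintype α] (𝒜 : Finset (Finset α)) : Finset α :=
  {x | (∃ A ∈ 𝒜, x ∈ A) ∧ ∃ A ∈ 𝒜, x ∉ A}

lemma mem_freeCoords [Fintype α] {𝒜 : Finset (Finset α)} {x : α} :
    x ∈ freeCoords 𝒜 ↔ (∃ A ∈ 𝒜, x ∈ A) ∧ ∃ A ∈ 𝒜, x ∉ A :=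
  mem_filter_univ x

lemma mem_iff_mem_of_notMem_freeCoords [Fintype α] {𝒜 : Finset (Finset α)} {x : α}
    (hx : x ∉ freeCoords 𝒜) {A B : Finset α} (hA : A ∈ 𝒜) (hB : B ∈ 𝒜) : x ∈ A ↔ x ∈ B := by
  have agree {A B : Finset α} (hA : A ∈ 𝒜) (hB : B ∈ 𝒜) (hxA : x ∈ A) : x ∈ B :=
    by_contra fun hxB => hx (mem_freeCoords.2 ⟨⟨A, hA, hxA⟩, B, hB, hxB⟩)
  exact ⟨agree hA hB, agree hB hA⟩

/-- The elements of `Z` on which `A` sides with the minority of the members of `𝒜`. -/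
def minorityCoords (𝒜 : Finset (Finset α)) (Z A : Finset α) : Finset α :=
  {x ∈ Z | if #{B ∈ 𝒜 | x ∈ B} ≤ #{B ∈ 𝒜 | x ∉ B} then x ∈ A else x ∉ A}

lemma sum_card_minorityCoords_le {𝒜 : Finset (Finset α)} {Z : Finset α} {ε : ℝ}
    (hskew : ∀ x ∈ Z, (#{A ∈ 𝒜 | x ∈ A} : ℝ) ≤ ε * #𝒜 ∨ (#{A ∈ 𝒜 | x ∉ A} : ℝ) ≤ ε * #𝒜) :
    ∑ A ∈ 𝒜, (#(minorityCoords 𝒜 Z A) : ℝ) ≤ #𝒜 * (ε * #Z) := by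
  have double_count : ∑ A ∈ 𝒜, #(minorityCoords 𝒜 Z A) = ∑ x ∈ Z,
      #{A ∈ 𝒜 | if #{B ∈ 𝒜 | x ∈ B} ≤ #{B ∈ 𝒜 | x ∉ B} then x ∈ A else x ∉ A} :=
    sum_card_bipartiteAbove_eq_sum_card_bipartiteBelow
      fun A x => if #{B ∈ 𝒜 | x ∈ B} ≤ #{B ∈ 𝒜 | x ∉ B} then x ∈ A else x ∉ A
  rw [← Nat.cast_sum, double_count, Nat.cast_sum,
    show #𝒜 * (ε * #Z) = #Z • (ε * #𝒜) by rw [nsmul_eq_mul]; ring]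
  refine sum_le_card_nsmul _ _ _ fun x hx => ?_
  by_cases h : #{B ∈ 𝒜 | x ∈ B} ≤ #{B ∈ 𝒜 | x ∉ B}
  · simp only [h, if_true]
    exact (hskew x hx).elim id (Nat.cast_le.2 h).trans
  · simp only [h, if_false]
    exact (hskew x hx).elim (Nat.cast_le.2 (not_le.1 h).le).trans id

lemma injOn_inter_minorityCoords [Fintype α] (𝒜 : Finset (Finset α)) (Z : Finset α) :
    Set.InjOn (fun A => (A ∩ (freeCoords 𝒜 \ Z), minorityCoords 𝒜 Z A)) 𝒜 := by
  intro A hA B hB hAB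
  obtain ⟨hout, hmin⟩ := Prod.mk.inj hAB
  ext x
  by_cases hxD : x ∈ freeCoords 𝒜
  · by_cases hxZ : x ∈ Z
    · have := Finset.ext_iff.1 hmin x
      simp only [minorityCoords, mem_filter, hxZ, true_and] at this
      split_ifs at this
      exacts [this, not_iff_not.1 this]
    · have hx : x ∈ freeCoords 𝒜 \ Z := mem_sdiff.2 ⟨hxD, hxZ⟩
      simpa only [mem_inter, hx, and_true] using Finset.ext_iff.1 hout x
  · exact mem_iff_mem_of_notMem_freeCoords hxD hA hB

lemma sum_pow_card_minorityCoords_le [Fintype α] (𝒜 : Finset (Finset α)) (Z : Finset α) {q : ℝ}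
    (hq : 0 ≤ q) : ∑ A ∈ 𝒜, q ^ #(minorityCoords 𝒜 Z A) ≤
      2 ^ #(freeCoords 𝒜 \ Z) * (1 + q) ^ #Z := by
  set code : Finset α → Finset α × Finset α :=
    fun A => (A ∩ (freeCoords 𝒜 \ Z), minorityCoords 𝒜 Z A)
  calc ∑ A ∈ 𝒜, q ^ #(minorityCoords 𝒜 Z A) = ∑ c ∈ 𝒜.image code, q ^ #c.2 :=
        (sum_image (f := fun c => q ^ #c.2) (injOn_inter_minorityCoords 𝒜 Z)).symm
    _ ≤ ∑ c ∈ (freeCoords 𝒜 \ Z).powerset ×ˢ Z.powerset, q ^ #c.2 := by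
        refine sum_le_sum_of_subset_of_nonneg (image_subset_iff.2 fun A _ => ?_) fun c _ _ =>
          pow_nonneg hq _
        exact mem_product.2
          ⟨mem_powerset.2 inter_subset_right, mem_powerset.2 (filter_subset _ _)⟩
    _ = 2 ^ #(freeCoords 𝒜 \ Z) * (1 + q) ^ #Z := by
        have binomial : ∑ C ∈ Z.powerset, q ^ #C = (1 + q) ^ #Z := by
          simpa only [one_pow, mul_one, add_comm] using sum_pow_mul_eq_add_pow q 1 Z
        simp only [sum_product, binomial, sum_const, card_powerset, nsmul_eq_mul, Nat.cast_pow,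
          Nat.cast_ofNat]

lemma card_mul_exp_neg_le_sum_exp_neg {ι : Type*} (s : Finset ι) {f : ι → ℝ} {c : ℝ}
    (hf : ∑ i ∈ s, f i ≤ #s * c) : #s * Real.exp (-c) ≤ ∑ i ∈ s, Real.exp (-f i) := by
  have tangent i : Real.exp (-c) * (c - f i + 1) ≤ Real.exp (-f i) :=
    calc Real.exp (-c) * (c - f i + 1) ≤ Real.exp (-c) * Real.exp (c - f i) := by
          gcongr
          exact Real.add_one_le_exp _
      _ = Real.exp (-f i) := by rw [← Real.exp_add]; ring_nf
  refine le_trans ?_ (sum_le_sum fun i _ => tangent i)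
  rw [← mul_sum, mul_comm, sum_add_distrib, sum_sub_distrib, sum_const, sum_const, nsmul_eq_mul,
    nsmul_one]
  gcongr
  linarith

lemma card_le_two_pow_mul_pow [Fintype α] {𝒜 : Finset (Finset α)} {Z : Finset α} {ε t : ℝ}
    (ht : 0 ≤ t)
    (hskew : ∀ x ∈ Z, (#{A ∈ 𝒜 | x ∈ A} : ℝ) ≤ ε * #𝒜 ∨ (#{A ∈ 𝒜 | x ∉ A} : ℝ) ≤ ε * #𝒜) :
    (#𝒜 : ℝ) ≤
      2 ^ #(freeCoords 𝒜 \ Z) * ((1 + Real.exp (-t)) * Real.exp (t * ε)) ^ #Z := by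
  have upper := sum_pow_card_minorityCoords_le 𝒜 Z (Real.exp_nonneg (-t))
  have lower := card_mul_exp_neg_le_sum_exp_neg 𝒜 (f := fun A => t * #(minorityCoords 𝒜 Z A))
    (c := t * (ε * #Z)) (by
      rw [← mul_sum]
      calc _ ≤ t * (#𝒜 * (ε * #Z)) := by gcongr; exact sum_card_minorityCoords_le hskew
        _ = _ := by ring)
  have pow_eq (A : Finset α) : Real.exp (-t) ^ #(minorityCoords 𝒜 Z A) =
      Real.exp (-(t * #(minorityCoords 𝒜 Z A))) := by
    rw [← Real.exp_nat_mul]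
    ring_nf
  simp only [pow_eq] at upper
  calc (#𝒜 : ℝ) = #𝒜 * Real.exp (-(t * (ε * #Z))) * Real.exp (t * ε) ^ #Z := by
        rw [← Real.exp_nat_mul, mul_assoc, ← Real.exp_add, show
          -(t * (ε * #Z)) + #Z * (t * ε) = 0 by ring, Real.exp_zero, mul_one]
    _ ≤ 2 ^ #(freeCoords 𝒜 \ Z) * (1 + Real.exp (-t)) ^ #Z * Real.exp (t * ε) ^ #Z :=
        mul_le_mul_of_nonneg_right (lower.trans upper) (by positivity)
    _ = _ := by rw [mul_pow, mul_assoc]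

lemma one_add_exp_neg_two_mul_exp_le : (1 + Real.exp (-2)) * Real.exp (2 * (1 / 32)) ≤ 5 / 4 := by
  have he : Real.exp (-2) ≤ 4 / 25 := by
    rw [Real.exp_neg, inv_le_comm₀ (Real.exp_pos _) (by norm_num),
      show (2 : ℝ) = 1 + 1 by norm_num, Real.exp_add]
    nlinarith [Real.exp_one_gt_d9]
  have hs : Real.exp (2 * (1 / 32)) ≤ 16 / 15 := by
    rw [← inv_le_inv₀ (by norm_num) (Real.exp_pos _), ← Real.exp_neg]
    linarith [Real.add_one_le_exp (-(2 * (1 / 32)) : ℝ)]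
  calc _ ≤ (1 + 4 / 25) * (16 / 15 : ℝ) := by gcongr
    _ ≤ 5 / 4 := by norm_num

end FreeCoords

section FreeIndices

variable {α : Type*} [Fintype α] [DecidableEq α]

/-- The indices `i < k` for which `x` is a free coordinate of `P i`. -/
def freeIndices (k : ℕ) (P : ℕ → Finset (Finset α)) (x : α) : Finset ℕ :=
  {i ∈ range k | x ∈ freeCoords (P i)}

lemma mem_freeIndices {k : ℕ} {P : ℕ → Finset (Finset α)} {x : α} {i : ℕ} :
    i ∈ freeIndices k P x ↔ i < k ∧ x ∈ freeCoords (P i) := by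
  rw [freeIndices, mem_filter, mem_range]

lemma prod_prod_freeCoords (k : ℕ) (P : ℕ → Finset (Finset α)) (w : α → ℝ) :
    ∏ i ∈ range k, ∏ x ∈ freeCoords (P i), w x = ∏ x, w x ^ #(freeIndices k P x) := by
  simp only [← prod_const]
  exact prod_comm' fun i x => by simp only [mem_freeIndices, mem_range, mem_univ, and_true]

end FreeIndices

namespace IsAlmostTower

variable {α : Type*} [DecidableEq α] {k : ℕ} {N : ℝ} {P : ℕ → Finset (Finset α)}

lemma half_lt_card (hP : IsAlmostTower k N P) (hN : 0 < N) {i : ℕ} (hi : i < k) :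
    N / 2 < #(P i) := by
  have hk : (1 : ℝ) ≤ k := by exact_mod_cast (Nat.zero_le i).trans_lt hi
  have : 1 / (16 * k) < (1 / 2 : ℝ) := one_div_lt_one_div_of_lt (by norm_num) (by linarith)
  exact lt_of_lt_of_le (by nlinarith) (hP.le_card i hi)

lemma card_notMem_le (hP : IsAlmostTower k N P) {i j : ℕ} (hij : i < j) (hj : j < k) {x : α}
    (hx : ∃ A ∈ P i, x ∈ A) : (#{B ∈ P j | x ∉ B} : ℝ) ≤ N / 64 := by
  obtain ⟨A, hA, hxA⟩ := hx
  have : {B ∈ P j | x ∉ B} ⊆ {B ∈ P j | ¬A ⊂ B} :=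
    monotone_filter_right _ fun B _ hxB hAB => hxB (hAB.1 hxA)
  exact (Nat.cast_le.2 (card_le_card this)).trans (hP.card_not_above_le i j hij hj A hA)

lemma card_mem_le (hP : IsAlmostTower k N P) {i j : ℕ} (hij : i < j) (hj : j < k) {x : α}
    (hx : ∃ B ∈ P j, x ∉ B) : (#{A ∈ P i | x ∈ A} : ℝ) ≤ N / 64 := by
  obtain ⟨B, hB, hxB⟩ := hx
  have : {A ∈ P i | x ∈ A} ⊆ {A ∈ P i | ¬A ⊂ B} :=
    monotone_filter_right _ fun A _ hxA hAB => hxB (hAB.1 hxA)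
  exact (Nat.cast_le.2 (card_le_card this)).trans (hP.card_not_below_le i j hij hj B hB)

lemma exists_mem_of_card_notMem_le (hP : IsAlmostTower k N P) (hN : 0 < N) {i : ℕ} (hi : i < k)
    {x : α} (hx : (#{A ∈ P i | x ∉ A} : ℝ) ≤ N / 64) : ∃ A ∈ P i, x ∈ A := by
  by_contra! hnot
  rw [filter_true_of_mem hnot] at hx
  linarith [hP.half_lt_card hN hi]

lemma exists_notMem_of_card_mem_le (hP : IsAlmostTower k N P) (hN : 0 < N) {i : ℕ} (hi : i < k)
    {x : α} (hx : (#{A ∈ P i | x ∈ A} : ℝ) ≤ N / 64) : ∃ A ∈ P i, x ∉ A := by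
  by_contra! hmem
  rw [filter_true_of_mem hmem] at hx
  linarith [hP.half_lt_card hN hi]

lemma mul_pow_le_prod_card (hP : IsAlmostTower k N P) (hk : k ≠ 0) (hN : 0 ≤ N) :
    15 / 16 * N ^ k ≤ ∏ i ∈ range k, (#(P i) : ℝ) := by
  have hk' : (1 : ℝ) ≤ k := by exact_mod_cast Nat.one_le_iff_ne_zero.2 hk
  have hk1 : 1 / (16 * k) ≤ (1 : ℝ) := by
    rw [div_le_one (by positivity)]
    linarith
  have bernoulli : (15 / 16 : ℝ) ≤ (1 - 1 / (16 * k)) ^ k :=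
    calc (15 / 16 : ℝ) = 1 + k * -(1 / (16 * k)) := by field_simp; norm_num
      _ ≤ (1 + -(1 / (16 * k))) ^ k := one_add_mul_le_pow (by linarith) k
      _ = (1 - 1 / (16 * k)) ^ k := by rw [← sub_eq_add_neg]
  calc 15 / 16 * N ^ k ≤ (1 - 1 / (16 * k)) ^ k * N ^ k := by gcongr
    _ = ∏ i ∈ range k, (1 - 1 / (16 * k)) * N := by rw [prod_const, card_range, mul_pow]
    _ ≤ ∏ i ∈ range k, (#(P i) : ℝ) := prod_le_prod
        (fun _ _ => mul_nonneg (by linarith) hN) fun i hi => hP.le_card i (mem_range.1 hi)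

variable [Fintype α]

lemma card_freeIndices_le_two (hP : IsAlmostTower k N P) (hN : 0 < N) (x : α) :
    #(freeIndices k P x) ≤ 2 := by
  by_contra! h
  set f := orderEmbOfCardLe _ (Nat.succ_le_of_lt h)
  have hf t : f t < k ∧ x ∈ freeCoords (P (f t)) :=
    mem_freeIndices.1 (orderEmbOfCardLe_mem _ (Nat.succ_le_of_lt h) t)
  have few_notMem := hP.card_notMem_le (f.lt_iff_lt.2 (by decide : (0 : Fin 3) < 1)) (hf 1).1
    (mem_freeCoords.1 (hf 0).2).1
  have few_mem := hP.card_mem_le (f.lt_iff_lt.2 (by decide : (1 : Fin 3) < 2)) (hf 2).1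
    (mem_freeCoords.1 (hf 2).2).2
  have split : (#{A ∈ P (f 1) | x ∈ A} : ℝ) + #{A ∈ P (f 1) | x ∉ A} = #(P (f 1)) := by
    exact_mod_cast card_filter_add_card_filter_not _
  linarith [hP.half_lt_card hN (hf 1).1]

lemma card_le_prod_ite (hP : IsAlmostTower k N P) (hN : 0 < N) {i : ℕ} (hi : i < k) :
    (#(P i) : ℝ) ≤
      ∏ x ∈ freeCoords (P i), if #(freeIndices k P x) = 1 then (2 : ℝ) else 5 / 4 := by
  set Z : Finset α := {x ∈ freeCoords (P i) | #(freeIndices k P x) ≠ 1} with hZ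
  have small {a : ℝ} (ha : a ≤ N / 64) : a ≤ 1 / 32 * #(P i) := by
    linarith [hP.half_lt_card hN hi]
  have skew x (hx : x ∈ Z) : (#{A ∈ P i | x ∈ A} : ℝ) ≤ 1 / 32 * #(P i) ∨
      (#{A ∈ P i | x ∉ A} : ℝ) ≤ 1 / 32 * #(P i) := by
    obtain ⟨hxi, hcard⟩ := mem_filter.1 hx
    have hi' : i ∈ freeIndices k P x := mem_freeIndices.2 ⟨hi, hxi⟩
    obtain ⟨j, hj, hji⟩ := exists_mem_ne
      (lt_of_le_of_ne (card_pos.2 ⟨i, hi'⟩) hcard.symm) i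
    obtain ⟨hjk, hxj⟩ := mem_freeIndices.1 hj
    rcases lt_or_gt_of_ne hji with hlt | hgt
    · exact .inr (small (hP.card_notMem_le hlt hi (mem_freeCoords.1 hxj).1))
    · exact .inl (small (hP.card_mem_le hgt hjk (mem_freeCoords.1 hxj).2))
  have sdiff_eq : freeCoords (P i) \ Z = {x ∈ freeCoords (P i) | #(freeIndices k P x) = 1} := by
    simp only [hZ, ← filter_not, not_not]
  rw [prod_ite, prod_const, prod_const, ← sdiff_eq]
  calc (#(P i) : ℝ) ≤ _ := card_le_two_pow_mul_pow zero_le_two skew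
    _ ≤ _ := by
      gcongr
      exact one_add_exp_neg_two_mul_exp_le

/-- Since the cubes must account for all of `2 ^ #α`, no coordinate can be wasted: a coordinate
shared by two of the `P i` would contribute `(5 / 4) ^ 2 < 2 * (15 / 16)` instead of `2`. -/
lemma card_freeIndices_eq_one (hP : IsAlmostTower k N P) (hk : k ≠ 0) (hN : 0 < N)
    (hα : N ^ k = 2 ^ Fintype.card α) (x : α) : #(freeIndices k P x) = 1 := by
  by_contra hx
  set w : α → ℝ := fun y => if #(freeIndices k P y) = 1 then 2 else 5 / 4
  have factor_le_two y : w y ^ #(freeIndices k P y) ≤ 2 := by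
    have := hP.card_freeIndices_le_two hN y
    interval_cases h : #(freeIndices k P y) <;> norm_num [w, h]
  have factor_le : w x ^ #(freeIndices k P x) ≤ 25 / 16 :=
    calc w x ^ #(freeIndices k P x) = (5 / 4) ^ #(freeIndices k P x) :=
          congrArg (· ^ _) (if_neg hx)
      _ ≤ (5 / 4) ^ 2 := pow_le_pow_right₀ (by norm_num) (hP.card_freeIndices_le_two hN x)
      _ = 25 / 16 := by norm_num
  have upper : ∏ i ∈ range k, (#(P i) : ℝ) ≤ 25 / 16 * 2 ^ (Fintype.card α - 1) :=
    calc ∏ i ∈ range k, (#(P i) : ℝ) ≤ ∏ i ∈ range k, ∏ y ∈ freeCoords (P i), w y :=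
          prod_le_prod (fun _ _ => Nat.cast_nonneg _) fun i hi =>
            hP.card_le_prod_ite hN (mem_range.1 hi)
      _ = w x ^ #(freeIndices k P x) * ∏ y ∈ univ.erase x, w y ^ #(freeIndices k P y) := by
          rw [prod_prod_freeCoords, ← mul_prod_erase univ _ (mem_univ x)]
      _ ≤ 25 / 16 * ∏ _y ∈ univ.erase x, 2 := by
          gcongr with y
          exact factor_le_two y
      _ = 25 / 16 * 2 ^ (Fintype.card α - 1) := by
          rw [prod_const, card_erase_of_mem (mem_univ x), card_univ]
  have lower := hP.mul_pow_le_prod_card hk hN.le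
  rw [hα, ← mul_pow_sub_one (Fintype.card_pos_iff.2 ⟨x⟩).ne'] at lower
  have : (0 : ℝ) < 2 ^ (Fintype.card α - 1) := by positivity
  linarith

lemma exists_monotone_subset_Icc (hP : IsAlmostTower k N P) (hk : k ≠ 0) (hN : 0 < N)
    (hα : N ^ k = 2 ^ Fintype.card α) :
    ∃ X : ℕ → Finset α, Monotone X ∧ X 0 = ∅ ∧ X k = univ ∧
      ∀ i < k, P i ⊆ Icc (X i) (X (i + 1)) := by
  choose c hc using fun x => card_eq_one.1 (hP.card_freeIndices_eq_one hk hN hα x)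
  have hc_mem x : c x < k ∧ x ∈ freeCoords (P (c x)) :=
    mem_freeIndices.1 (hc x ▸ mem_singleton_self _)
  have hc_unique {x i} (hi : i < k) (hx : x ∈ freeCoords (P i)) : i = c x :=
    mem_singleton.1 (hc x ▸ mem_freeIndices.2 ⟨hi, hx⟩)
  refine ⟨fun i => {x | c x < i}, fun i j hij => ?_, ?_, ?_, fun i hi A hA =>
    mem_Icc.2 ⟨fun x hx => ?_, fun x hxA => ?_⟩⟩
  · exact monotone_filter_right _ fun x _ hx => hx.trans_le hij
  · exact filter_false_of_mem fun x _ => Nat.not_lt_zero _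
  · exact filter_true_of_mem fun x _ => (hc_mem x).1
  · have hlt := (mem_filter_univ x).1 hx
    by_contra hxA
    have hmem := hP.exists_mem_of_card_notMem_le hN hi
      (hP.card_notMem_le hlt hi (mem_freeCoords.1 (hc_mem x).2).1)
    exact hlt.ne' (hc_unique hi (mem_freeCoords.2 ⟨hmem, A, hA, hxA⟩))
  · by_contra hx
    have hlt : i < c x := by simpa using hx
    have hnotMem := hP.exists_notMem_of_card_mem_le hN hi
      (hP.card_mem_le hlt (hc_mem x).1 (mem_freeCoords.1 (hc_mem x).2).2)
    exact hlt.ne (hc_unique hi (mem_freeCoords.2 ⟨⟨A, hA, hxA⟩, hnotMem⟩))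

end IsAlmostTower

/-! ### Comparable sets and the exchange argument -/

section Comparables

variable {α : Type*} [DecidableEq α]

/-- The members of `𝒢` that are comparable to `A` and distinct from it. -/
def comparables (A : Finset α) (𝒢 : Finset (Finset α)) : Finset (Finset α) :=
  {C ∈ 𝒢 | A ⊂ C ∨ C ⊂ A}

lemma mem_comparables {A C : Finset α} {𝒢 : Finset (Finset α)} :
    C ∈ comparables A 𝒢 ↔ C ∈ 𝒢 ∧ (A ⊂ C ∨ C ⊂ A) :=
  mem_filter

lemma card_comparables_le (A : Finset α) (𝒢 : Finset (Finset α)) : #(comparables A 𝒢) ≤ #𝒢 :=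
  card_filter_le _ _

lemma two_pow_half_le_card_comparables_Icc {S A T : Finset α} (hSA : S ⊆ A) (hAT : A ⊆ T) {ℓ : ℕ}
    (hST : #T = #S + ℓ) : 2 ^ (ℓ / 2) ≤ #(comparables A (Icc S T)) + 1 := by
  have hS := card_le_card hSA
  have hT := card_le_card hAT
  have below : Ico S A ⊆ comparables A (Icc S T) := fun C hC => by
    obtain ⟨hSC, hCA⟩ := mem_Ico.1 hC
    exact mem_comparables.2 ⟨mem_Icc.2 ⟨hSC, hCA.le.trans hAT⟩, .inr hCA⟩
  have above : Ioc A T ⊆ comparables A (Icc S T) := fun C hC => by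
    obtain ⟨hAC, hCT⟩ := mem_Ioc.1 hC
    exact mem_comparables.2 ⟨mem_Icc.2 ⟨hSA.trans hAC.le, hCT⟩, .inl hAC⟩
  have card_below := card_le_card below
  have card_above := card_le_card above
  rw [card_Ico_finset hSA] at card_below
  rw [card_Ioc_finset hAT] at card_above
  rcases le_total (ℓ / 2) (#A - #S) with h | h
  · have := Nat.pow_le_pow_right two_pos h
    omega
  · have := Nat.pow_le_pow_right two_pos (show ℓ / 2 ≤ #T - #A by omega)
    omega

lemma card_comparables_Icc_mul_le_of_subset_left {S F T : Finset α} (hST : S ⊆ T) (hSF : S ⊆ F)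
    (hFT : ¬F ⊆ T) : #(comparables F (Icc S T)) * 2 ^ #(T \ F) ≤ 2 ^ (#T - #S) := by
  have hsub : comparables F (Icc S T) ⊆ Icc S (T ∩ F) := fun C hC => by
    obtain ⟨hC, hFC | hCF⟩ := mem_comparables.1 hC <;> obtain ⟨hSC, hCT⟩ := mem_Icc.1 hC
    · exact absurd (hFC.1.trans hCT) hFT
    · exact mem_Icc.2 ⟨hSC, subset_inter hCT hCF.1⟩
  have hS : S ⊆ T ∩ F := subset_inter hST hSF
  calc #(comparables F (Icc S T)) * 2 ^ #(T \ F) ≤ #(Icc S (T ∩ F)) * 2 ^ #(T \ F) := by gcongr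
    _ = 2 ^ (#T - #S) := by
      rw [card_Icc_finset hS, ← pow_add, ← card_inter_add_card_sdiff T F,
        Nat.sub_add_comm (card_le_card hS)]

lemma card_comparables_Icc_mul_le_of_subset_right {S F T : Finset α} (hST : S ⊆ T) (hFT : F ⊆ T)
    (hSF : ¬S ⊆ F) : #(comparables F (Icc S T)) * 2 ^ #(F \ S) ≤ 2 ^ (#T - #S) := by
  have hsub : comparables F (Icc S T) ⊆ Icc (F ∪ S) T := fun C hC => by
    obtain ⟨hC, hFC | hCF⟩ := mem_comparables.1 hC <;> obtain ⟨hSC, hCT⟩ := mem_Icc.1 hC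
    · exact mem_Icc.2 ⟨union_subset hFC.1 hSC, hCT⟩
    · exact absurd (hSC.trans hCF.1) hSF
  have hT : F ∪ S ⊆ T := union_subset hFT hST
  have hcard := card_sdiff_add_card F S
  have hle := card_le_card hT
  calc #(comparables F (Icc S T)) * 2 ^ #(F \ S) ≤ #(Icc (F ∪ S) T) * 2 ^ #(F \ S) := by gcongr
    _ = 2 ^ (#T - #S) := by
      rw [card_Icc_finset hT, ← pow_add]
      congr 1
      omega

lemma comparables_Icc_eq_empty {S F T : Finset α} (hFT : ¬F ⊆ T) (hSF : ¬S ⊆ F) :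
    comparables F (Icc S T) = ∅ := by
  refine filter_eq_empty_iff.2 fun C hC => ?_
  obtain ⟨hSC, hCT⟩ := mem_Icc.1 hC
  rintro (hFC | hCF)
  exacts [hFT (hFC.1.trans hCT), hSF (hSC.trans hCF.1)]

lemma card_interedges_insert {A : Finset α} {𝒢 : Finset (Finset α)} (hA : A ∉ 𝒢) :
    #(interedges (· ⊂ ·) (insert A 𝒢) (insert A 𝒢)) =
      #(interedges (· ⊂ ·) 𝒢 𝒢) + #(comparables A 𝒢) := by
  have insert_right (B : Finset α) :
      #{C ∈ insert A 𝒢 | B ⊂ C} = #{C ∈ 𝒢 | B ⊂ C} + if B ⊂ A then 1 else 0 := by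
    rw [filter_insert]
    split_ifs
    · exact card_insert_of_notMem fun h => hA (mem_filter.1 h).1
    · rfl
  have comparables_card : #(comparables A 𝒢) = #{C ∈ 𝒢 | A ⊂ C} + #{C ∈ 𝒢 | C ⊂ A} := by
    rw [comparables, filter_or, card_union_of_disjoint]
    exact disjoint_filter.2 fun C _ h => h.asymm
  simp only [card_interedges_eq_sum_left, sum_insert hA, insert_right, sum_add_distrib,
    ssubset_irrefl, if_false, comparables_card, ← card_filter]
  omega

/-- Exchange argument: trading `F` for `A` in `ℱ` gains no comparable pairs. -/
lemma card_comparables_le_add {ℱ 𝒯 : Finset (Finset α)} {F A : Finset α}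
    (hmax : ∀ 𝒢 : Finset (Finset α), #𝒢 = #ℱ →
      #(interedges (· ⊂ ·) 𝒢 𝒢) ≤ #(interedges (· ⊂ ·) ℱ ℱ))
    (hF : F ∈ ℱ \ 𝒯) (hA : A ∈ 𝒯 \ ℱ) :
    #(comparables A 𝒯) ≤ #(comparables F 𝒯) + #(ℱ \ 𝒯) + #(𝒯 \ ℱ) := by
  obtain ⟨hFℱ, hF𝒯⟩ := mem_sdiff.1 hF
  have hAℱ := (mem_sdiff.1 hA).2
  have hA' : A ∉ ℱ.erase F := fun h => hAℱ (mem_of_mem_erase h)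
  have exchange := hmax (insert A (ℱ.erase F)) (by
    rw [card_insert_of_notMem hA', card_erase_add_one hFℱ])
  have split := card_interedges_insert (notMem_erase F ℱ)
  rw [insert_erase hFℱ] at split
  rw [card_interedges_insert hA', split] at exchange
  have hF_sub : comparables F (ℱ.erase F) ⊆ comparables F 𝒯 ∪ (ℱ \ 𝒯) := fun C hC => by
    obtain ⟨hCℱ, hC⟩ := mem_comparables.1 hC
    by_cases hC𝒯 : C ∈ 𝒯
    · exact mem_union_left _ (mem_comparables.2 ⟨hC𝒯, hC⟩)
    · exact mem_union_right _ (mem_sdiff.2 ⟨mem_of_mem_erase hCℱ, hC𝒯⟩)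
  have hA_sub : comparables A 𝒯 ⊆ comparables A (ℱ.erase F) ∪ (𝒯 \ ℱ) := fun C hC => by
    obtain ⟨hC𝒯, hC⟩ := mem_comparables.1 hC
    by_cases hCℱ : C ∈ ℱ
    · have hCF : C ≠ F := fun h => hF𝒯 (h ▸ hC𝒯)
      exact mem_union_left _ (mem_comparables.2 ⟨mem_erase.2 ⟨hCF, hCℱ⟩, hC⟩)
    · exact mem_union_right _ (mem_sdiff.2 ⟨hC𝒯, hCℱ⟩)
  have hF_card := (card_le_card hF_sub).trans (card_union_le _ _)
  have hA_card := (card_le_card hA_sub).trans (card_union_le _ _)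
  omega

end Comparables

section TowerFamily

variable {α : Type*} [DecidableEq α] {k ℓ : ℕ} {X : ℕ → Finset α}

/-- The union of the `k` cubes between consecutive terms of the chain `X`. -/
def towerFamily (k : ℕ) (X : ℕ → Finset α) : Finset (Finset α) :=
  (range k).biUnion fun i => Icc (X i) (X (i + 1))

lemma mem_towerFamily {F : Finset α} :
    F ∈ towerFamily k X ↔ ∃ i < k, X i ⊆ F ∧ F ⊆ X (i + 1) := by
  simp only [towerFamily, mem_biUnion, mem_range, mem_Icc]

lemma ssubset_of_mem_Ioc (hX : Monotone X) {i j : ℕ} (hij : i < j) {A B : Finset α}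
    (hA : A ∈ Ioc (X i) (X (i + 1))) (hB : B ∈ Ioc (X j) (X (j + 1))) : A ⊂ B :=
  ((mem_Ioc.1 hA).2.trans (hX hij)).trans_lt (mem_Ioc.1 hB).1

lemma pairwise_disjoint_Ioc (hX : Monotone X) :
    Pairwise (Function.onFun Disjoint fun i => Ioc (X i) (X (i + 1))) :=
  (pairwise_disjoint_on _).2 fun _ _ hij =>
    disjoint_left.2 fun _ hA hA' => ssubset_irrefl _ (ssubset_of_mem_Ioc hX hij hA hA')

lemma towerFamily_eq_insert_biUnion_Ioc (hX : Monotone X) (hk : 0 < k) :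
    towerFamily k X = insert (X 0) ((range k).biUnion fun i => Ioc (X i) (X (i + 1))) := by
  induction k, hk using Nat.le_induction with
  | base => simp only [towerFamily, Nat.succ_eq_add_one, zero_add, range_one, singleton_biUnion,
      Ioc_insert_left (hX zero_le_one)]
  | succ k hk ih =>
    have hXk : X k ∈ towerFamily k X := mem_towerFamily.2
      ⟨k - 1, Nat.sub_one_lt_of_lt hk, hX (Nat.sub_le _ _), by rw [Nat.sub_add_cancel hk]⟩
    rw [range_add_one, biUnion_insert, ← union_insert, ← ih, towerFamily, range_add_one,
      biUnion_insert, ← towerFamily, ← Ioc_insert_left (hX k.le_succ), insert_union,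
      insert_eq_of_mem (mem_union_right _ hXk)]

end TowerFamily

/-- `X` cuts `α` into `k` consecutive blocks of size `ℓ`. -/
structure IsTowerChain {α : Type*} [Fintype α] (k ℓ : ℕ) (X : ℕ → Finset α) : Prop where
  mono : Monotone X
  zero : X 0 = ∅
  top : X k = univ
  card : ∀ i ≤ k, #(X i) = i * ℓ

lemma isTowerChain_val_lt (k ℓ : ℕ) :
    IsTowerChain k ℓ fun i => ({x | x.val < i * ℓ} : Finset (Fin (k * ℓ))) where
  mono i j hij x hx := by
    simp only [mem_filter_univ] at hx ⊢
    exact hx.trans_le (Nat.mul_le_mul_right ℓ hij)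
  zero := by simp only [zero_mul, Nat.not_lt_zero, filter_false]
  top := filter_true_of_mem fun x _ => x.isLt
  card i hi := by rw [Fin.card_filter_val_lt, min_eq_right (Nat.mul_le_mul_right ℓ hi)]

namespace IsTowerChain

variable {α : Type*} [Fintype α] {k ℓ : ℕ} {X : ℕ → Finset α}

lemma card_succ (hX : IsTowerChain k ℓ X) {i : ℕ} (hi : i < k) : #(X (i + 1)) = #(X i) + ℓ := by
  rw [hX.card _ hi, hX.card _ hi.le, Nat.succ_mul]

variable [DecidableEq α]

lemma card_Icc (hX : IsTowerChain k ℓ X) {i : ℕ} (hi : i < k) :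
    #(Icc (X i) (X (i + 1))) = 2 ^ ℓ := by
  rw [card_Icc_finset (hX.mono i.le_succ), hX.card_succ hi, Nat.add_sub_cancel_left]

lemma card_biUnion_Ioc (hX : IsTowerChain k ℓ X) {j : ℕ} (hj : j ≤ k) :
    #((range j).biUnion fun i => Ioc (X i) (X (i + 1))) = j * (2 ^ ℓ - 1) := by
  rw [card_biUnion ((pairwise_disjoint_Ioc hX.mono).set_pairwise _), sum_const_nat, card_range]
  intro i hi
  have hik : i < k := (mem_range.1 hi).trans_le hj
  rw [card_Ioc_finset (hX.mono i.le_succ), hX.card_succ hik, Nat.add_sub_cancel_left]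

lemma card_towerFamily (hX : IsTowerChain k ℓ X) (hk : 0 < k) :
    #(towerFamily k X) = k * (2 ^ ℓ - 1) + 1 := by
  rw [towerFamily_eq_insert_biUnion_Ioc hX.mono hk, card_insert_of_notMem,
    hX.card_biUnion_Ioc le_rfl]
  intro h
  obtain ⟨i, _, hi⟩ := mem_biUnion.1 h
  exact not_ssubset_empty _ (hX.zero ▸ (mem_Ioc.1 hi).1)

lemma choose_two_mul_le_card_interedges (hX : IsTowerChain k ℓ X) (hk : 0 < k) :
    k.choose 2 * (2 ^ ℓ - 1) ^ 2 ≤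
      #(interedges (· ⊂ ·) (towerFamily k X) (towerFamily k X)) := by
  have sub_tower : (range k).biUnion (fun i => Ioc (X i) (X (i + 1))) ⊆ towerFamily k X :=
    towerFamily_eq_insert_biUnion_Ioc hX.mono hk ▸ subset_insert _ _
  have below {j : ℕ} (hj : j < k) {B : Finset α} (hB : B ∈ Ioc (X j) (X (j + 1))) :
      j * (2 ^ ℓ - 1) ≤ #{A ∈ towerFamily k X | A ⊂ B} := by
    rw [← hX.card_biUnion_Ioc hj.le]
    refine card_le_card fun A hA => ?_
    obtain ⟨i, hi, hAi⟩ := mem_biUnion.1 hA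
    refine mem_filter.2 ⟨sub_tower (mem_biUnion.2 ⟨i, ?_, hAi⟩), ?_⟩
    · exact mem_range.2 ((mem_range.1 hi).trans hj)
    · exact ssubset_of_mem_Ioc hX.mono (mem_range.1 hi) hAi hB
  rw [card_interedges_eq_sum_right]
  calc k.choose 2 * (2 ^ ℓ - 1) ^ 2
      = ∑ j ∈ range k, (2 ^ ℓ - 1) * (j * (2 ^ ℓ - 1)) := by
        rw [← mul_sum, ← sum_mul, sum_range_id, Nat.choose_two_right]; ring
    _ ≤ ∑ j ∈ range k, ∑ B ∈ Ioc (X j) (X (j + 1)), #{A ∈ towerFamily k X | A ⊂ B} := by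
        refine sum_le_sum fun j hj => ?_
        have hjk := mem_range.1 hj
        have card_Ioc : #(Ioc (X j) (X (j + 1))) = 2 ^ ℓ - 1 := by
          rw [card_Ioc_finset (hX.mono j.le_succ), hX.card_succ hjk, Nat.add_sub_cancel_left]
        rw [← card_Ioc, ← smul_eq_mul #(Ioc _ _)]
        exact card_nsmul_le_sum _ _ _ fun B hB => card_Ioc ▸ below hjk hB
    _ = ∑ B ∈ (range k).biUnion fun j => Ioc (X j) (X (j + 1)),
          #{A ∈ towerFamily k X | A ⊂ B} :=
        (sum_biUnion ((pairwise_disjoint_Ioc hX.mono).set_pairwise _)).symm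
    _ ≤ _ := sum_le_sum_of_subset sub_tower

lemma mul_add_two_pow_half_le_card_comparables (hX : IsTowerChain k ℓ X) {A : Finset α}
    (hA : A ∈ towerFamily k X) :
    k * (2 ^ ℓ - 1) + 2 ^ (ℓ / 2) ≤ #(comparables A (towerFamily k X)) + 2 ^ ℓ := by
  obtain ⟨i, hi, hiA, hAi⟩ := mem_towerFamily.1 hA
  set Q := Icc (X i) (X (i + 1))
  have hAQ : A ∈ Q := mem_Icc.2 ⟨hiA, hAi⟩
  have hQ : Q ⊆ towerFamily k X :=
    subset_biUnion_of_mem (fun i => Icc (X i) (X (i + 1))) (mem_range.2 hi)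
  have inside : 2 ^ (ℓ / 2) ≤ #(comparables A Q) + 1 :=
    two_pow_half_le_card_comparables_Icc hiA hAi (hX.card_succ hi)
  have outside : towerFamily k X \ Q ⊆ comparables A (towerFamily k X) := fun C hC => by
    obtain ⟨hCT, hCQ⟩ := mem_sdiff.1 hC
    obtain ⟨j, hj, hjC, hCj⟩ := mem_towerFamily.1 hCT
    have hne : A ≠ C := fun h => hCQ (h ▸ hAQ)
    refine mem_comparables.2 ⟨hCT, ?_⟩
    rcases lt_trichotomy i j with hij | rfl | hij
    · exact .inl (hne.lt_of_le (hAi.trans ((hX.mono hij).trans hjC)))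
    · exact absurd (mem_Icc.2 ⟨hjC, hCj⟩) hCQ
    · exact .inr (hne.symm.lt_of_le (hCj.trans ((hX.mono hij).trans hiA)))
  have union_sub : comparables A Q ∪ (towerFamily k X \ Q) ⊆ comparables A (towerFamily k X) :=
    union_subset (filter_subset_filter _ hQ) outside
  have card_union := card_le_card union_sub
  rw [card_union_of_disjoint (s := comparables A Q) (disjoint_sdiff.mono_left (filter_subset _ _)),
    card_sdiff_of_subset hQ, hX.card_towerFamily (Nat.zero_lt_of_lt hi), hX.card_Icc hi]
    at card_union
  omega

lemma card_comparables_add_le (hX : IsTowerChain k ℓ X) (F : Finset α) {S : Finset ℕ}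
    (hS : S ⊆ range k) :
    #(comparables F (towerFamily k X)) + #S * 2 ^ ℓ ≤
      k * 2 ^ ℓ + ∑ i ∈ S, #(comparables F (Icc (X i) (X (i + 1)))) := by
  have outside : ∑ i ∈ range k \ S, #(comparables F (Icc (X i) (X (i + 1)))) ≤
      #(range k \ S) * 2 ^ ℓ := by
    refine sum_le_card_nsmul _ _ _ fun i hi => (card_comparables_le _ _).trans_eq (hX.card_Icc ?_)
    exact mem_range.1 (mem_sdiff.1 hi).1
  have total : #(comparables F (towerFamily k X)) ≤
      ∑ i ∈ range k, #(comparables F (Icc (X i) (X (i + 1)))) := by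
    rw [comparables, towerFamily, filter_biUnion]
    exact card_biUnion_le
  rw [← sum_sdiff hS] at total
  calc #(comparables F (towerFamily k X)) + #S * 2 ^ ℓ
      ≤ #(range k \ S) * 2 ^ ℓ + ∑ i ∈ S, #(comparables F (Icc (X i) (X (i + 1)))) +
          #S * 2 ^ ℓ := by gcongr; omega
    _ = k * 2 ^ ℓ + ∑ i ∈ S, #(comparables F (Icc (X i) (X (i + 1)))) := by
      rw [add_right_comm, ← add_mul, card_sdiff_add_card_eq_card hS, card_range]

lemma exists_lt_of_notMem_towerFamily (hX : IsTowerChain k ℓ X) (hk : 0 < k) {F : Finset α}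
    (hF : F ∉ towerFamily k X) : ∃ a b, a < b ∧ b < k ∧
      X a ⊆ F ∧ ¬X (a + 1) ⊆ F ∧ ¬F ⊆ X b ∧ F ⊆ X (b + 1) := by
  have h0F : X 0 ⊆ F := hX.zero ▸ empty_subset F
  have hF0 : ¬F ⊆ X 0 := fun h => hF (mem_towerFamily.2 ⟨0, hk, h0F, h.trans (hX.mono zero_le_one)⟩)
  obtain ⟨b, hFb, hFb'⟩ := Nat.exists_not_and_succ_of_not_zero_of_exists (p := (F ⊆ X ·)) hF0
    ⟨k, hX.top ▸ subset_univ F⟩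
  have hb : b < k := not_le.1 fun hkb => hFb (((hX.top ▸ subset_univ F).trans (hX.mono hkb)))
  have hbF : ¬X b ⊆ F := fun h => hF (mem_towerFamily.2 ⟨b, hb, h, hFb'⟩)
  obtain ⟨a, haF, haF'⟩ := Nat.exists_not_and_succ_of_not_zero_of_exists (p := (¬X · ⊆ F))
    (not_not.2 h0F) ⟨b, hbF⟩
  have hab : a < b := not_le.1 fun hba => hbF ((hX.mono hba).trans (not_not.1 haF))
  exact ⟨a, b, hab, hb, not_not.1 haF, haF', hFb, hFb'⟩

lemma exists_card_comparables_Icc_mul_le (hX : IsTowerChain k ℓ X) (hk : 0 < k) {F : Finset α}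
    (hF : F ∉ towerFamily k X) : ∃ a b, a < b ∧ b < k ∧ ¬X (a + 1) ⊆ F ∧ ¬F ⊆ X b ∧
      #(comparables F (Icc (X a) (X (a + 1)))) * 2 ^ #(X (a + 1) \ F) ≤ 2 ^ ℓ ∧
      #(comparables F (Icc (X b) (X (b + 1)))) * 2 ^ #(F \ X b) ≤ 2 ^ ℓ := by
  obtain ⟨a, b, hab, hb, haF, haF', hFb, hFb'⟩ := hX.exists_lt_of_notMem_towerFamily hk hF
  have hX_ab : X (a + 1) ⊆ X b := hX.mono hab
  have lower := card_comparables_Icc_mul_le_of_subset_left (hX.mono a.le_succ) haF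
    fun h => hFb (h.trans hX_ab)
  have upper := card_comparables_Icc_mul_le_of_subset_right (hX.mono b.le_succ) hFb'
    fun h => haF' (hX_ab.trans h)
  rw [hX.card_succ (hab.trans hb), Nat.add_sub_cancel_left] at lower
  rw [hX.card_succ hb, Nat.add_sub_cancel_left] at upper
  exact ⟨a, b, hab, hb, haF', hFb, lower, upper⟩

lemma card_comparables_add_two_pow_le (hX : IsTowerChain k ℓ X) (hk : 0 < k) {F : Finset α}
    (hF : F ∉ towerFamily k X) :
    #(comparables F (towerFamily k X)) + 2 ^ ℓ ≤ k * 2 ^ ℓ := by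
  obtain ⟨a, b, hab, hb, haF, hFb, lower, upper⟩ := hX.exists_card_comparables_Icc_mul_le hk hF
  have hS : ({a, b} : Finset ℕ) ⊆ range k := by grind
  have total := hX.card_comparables_add_le F hS
  rw [card_pair hab.ne, sum_pair hab.ne] at total
  have lower_half := (Nat.mul_le_mul_left _ (le_self_pow₀ one_le_two
    (card_pos.2 (sdiff_nonempty.2 haF)).ne')).trans lower
  have upper_half := (Nat.mul_le_mul_left _ (le_self_pow₀ one_le_two
    (card_pos.2 (sdiff_nonempty.2 hFb)).ne')).trans upper
  omega

end IsTowerChain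

section NearFamily

variable {α : Type*} [Fintype α] [DecidableEq α] {k ℓ : ℕ} {X : ℕ → Finset α}

/-- The sets obtained from one of `X 0, …, X (k - 1)` by exchanging one element. Apart from the
tower itself, these are the only sets that can be comparable to almost `k - 1` cubes' worth of
sets of the tower. -/
def nearFamily (k : ℕ) (X : ℕ → Finset α) : Finset (Finset α) :=
  (range k ×ˢ univ ×ˢ univ).image fun p : ℕ × α × α => insert p.2.2 ((X p.1).erase p.2.1)

lemma card_nearFamily_le (k : ℕ) (X : ℕ → Finset α) :
    #(nearFamily k X) ≤ k * Fintype.card α ^ 2 := by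
  refine card_image_le.trans_eq ?_
  rw [card_product, card_product, card_range, card_univ, sq]

lemma mem_nearFamily_of_card_sdiff_eq_one {F : Finset α} {i : ℕ} (hi : i < k)
    (hXF : #(X i \ F) = 1) (hFX : #(F \ X i) = 1) : F ∈ nearFamily k X := by
  obtain ⟨x, hx⟩ := card_eq_one.1 hXF
  obtain ⟨y, hy⟩ := card_eq_one.1 hFX
  refine mem_image.2 ⟨(i, x, y), by simp [hi], ?_⟩
  rw [← sdiff_singleton_eq_erase, ← hx, sdiff_sdiff_right_self, inf_eq_inter, inter_comm,
    insert_eq, ← hy, sdiff_union_inter]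

lemma IsTowerChain.four_mul_card_comparables_add_le (hX : IsTowerChain k ℓ X) (hk : 0 < k)
    {F : Finset α} (hF : F ∉ towerFamily k X) (hF' : F ∉ nearFamily k X) :
    4 * #(comparables F (towerFamily k X)) + 5 * 2 ^ ℓ ≤ 4 * (k * 2 ^ ℓ) := by
  obtain ⟨a, b, hab, hb, haF, hFb, lower, upper⟩ := hX.exists_card_comparables_Icc_mul_le hk hF
  have one_le_lower : 1 ≤ #(X (a + 1) \ F) := card_pos.2 (sdiff_nonempty.2 haF)
  have one_le_upper : 1 ≤ #(F \ X b) := card_pos.2 (sdiff_nonempty.2 hFb)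
  have two_mul_le {c d : ℕ} (hd : 1 ≤ d) (h : c * 2 ^ d ≤ 2 ^ ℓ) : c * 2 ≤ 2 ^ ℓ :=
    (Nat.mul_le_mul_left c (Nat.pow_le_pow_right two_pos hd)).trans h
  have four_mul_le {c d : ℕ} (hd : 2 ≤ d) (h : c * 2 ^ d ≤ 2 ^ ℓ) : c * 4 ≤ 2 ^ ℓ :=
    (Nat.mul_le_mul_left c (Nat.pow_le_pow_right two_pos hd)).trans h
  have lower_half := two_mul_le one_le_lower lower
  have upper_half := two_mul_le one_le_upper upper
  obtain rfl | hab' : a + 1 = b ∨ a + 1 < b := by omega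
  · have total := hX.card_comparables_add_le F (S := {a, a + 1}) (by grind)
    rw [card_pair hab.ne, sum_pair hab.ne] at total
    by_cases hlower : #(X (a + 1) \ F) = 1
    · have hupper : #(F \ X (a + 1)) ≠ 1 := fun h =>
        hF' (mem_nearFamily_of_card_sdiff_eq_one hb hlower h)
      have := four_mul_le (by omega) upper
      omega
    · have := four_mul_le (by omega) lower
      omega
  · have total := hX.card_comparables_add_le F (S := {a, a + 1, b}) (by grind)
    have middle : comparables F (Icc (X (a + 1)) (X (a + 1 + 1))) = ∅ :=
      comparables_Icc_eq_empty (fun h => hFb (h.trans (hX.mono hab'))) haF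
    rw [card_eq_three.2 ⟨a, a + 1, b, by omega, by omega, by omega, rfl⟩,
      sum_insert (by grind), sum_pair hab'.ne, middle, card_empty] at total
    omega

end NearFamily

lemma eventually_mul_sq_lt_two_pow (C : ℕ) : ∀ᶠ t : ℕ in atTop, C * t ^ 2 < 2 ^ t := by
  have lim : Tendsto (fun t : ℕ => C * ((t : ℝ) ^ 2 / 2 ^ t)) atTop (nhds 0) := by
    simpa using (tendsto_pow_const_div_const_pow_of_one_lt 2 one_lt_two).const_mul (C : ℝ)
  filter_upwards [lim.eventually_lt_const one_pos] with t ht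
  rw [← mul_div_assoc, div_lt_one (by positivity)] at ht
  exact_mod_cast ht

lemma eventually_mul_sq_add_lt_two_pow_half (k : ℕ) :
    ∀ᶠ ℓ : ℕ in atTop, 2 * (k * (k * ℓ) ^ 2) + k < 2 ^ (ℓ / 2) := by
  have half := Nat.tendsto_div_const_atTop two_ne_zero
  filter_upwards [half.eventually (eventually_mul_sq_lt_two_pow (18 * k ^ 3 + k)),
    half.eventually_ge_atTop 1] with ℓ hℓ h1
  refine lt_of_le_of_lt ?_ hℓ
  have hℓ3 : ℓ ≤ 3 * (ℓ / 2) := by omega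
  calc 2 * (k * (k * ℓ) ^ 2) + k
      ≤ 2 * (k * (k * (3 * (ℓ / 2))) ^ 2) + k * (ℓ / 2) ^ 2 := by
        gcongr
        exact Nat.le_mul_of_pos_right k (by positivity)
    _ = (18 * k ^ 3 + k) * (ℓ / 2) ^ 2 := by ring

namespace IsAlmostTower

variable {α : Type*} [DecidableEq α] {k : ℕ} {P : ℕ → Finset (Finset α)}

lemma sixteen_mul_card_sdiff_le {N : ℝ} (hP : IsAlmostTower k N P) (hk : k ≠ 0)
    {ℱ 𝒯 : Finset (Finset α)} (hPℱ : ∀ i, P i ⊆ ℱ) (hP𝒯 : ∀ i < k, P i ⊆ 𝒯)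
    (hℱ : #ℱ ≤ k * N) : 16 * (#(ℱ \ 𝒯) : ℝ) ≤ N := by
  have common : (range k).biUnion P ⊆ ℱ ∩ 𝒯 := biUnion_subset.2 fun i hi =>
    subset_inter (hPℱ i) (hP𝒯 i (mem_range.1 hi))
  have card_common : k * ((1 - 1 / (16 * k)) * N) ≤ #(ℱ ∩ 𝒯) := calc
    k * ((1 - 1 / (16 * k)) * N) = #(range k) • ((1 - 1 / (16 * k)) * N) := by
      rw [card_range, nsmul_eq_mul]
    _ ≤ ∑ i ∈ range k, (#(P i) : ℝ) :=
      card_nsmul_le_sum _ _ _ fun i hi => hP.le_card i (mem_range.1 hi)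
    _ = #((range k).biUnion P) := by
      rw [card_biUnion (((pairwise_disjoint_on P).2 hP.disjoint).set_pairwise _), Nat.cast_sum]
    _ ≤ #(ℱ ∩ 𝒯) := by exact_mod_cast card_le_card common
  have card_split : (#(ℱ \ 𝒯) : ℝ) + #(ℱ ∩ 𝒯) = #ℱ := by
    exact_mod_cast card_sdiff_add_card_inter ℱ 𝒯
  have hkR : (k : ℝ) ≠ 0 := Nat.cast_ne_zero.2 hk
  have expand : k * ((1 - 1 / (16 * k)) * N) = k * N - N / 16 := by field_simp
  linarith

lemma exists_isTowerChain [Fintype α] {ℓ : ℕ} (hP : IsAlmostTower k (2 ^ ℓ) P) (hk : k ≠ 0)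
    (hα : Fintype.card α = k * ℓ) :
    ∃ X, IsTowerChain k ℓ X ∧ ∀ i < k, P i ⊆ Icc (X i) (X (i + 1)) := by
  obtain ⟨X, mono, zero, top, hPX⟩ := hP.exists_monotone_subset_Icc hk (by positivity) (by
    rw [hα, ← pow_mul, mul_comm])
  have step {i : ℕ} (hi : i < k) : #(X i) + ℓ ≤ #(X (i + 1)) := by
    have card_Icc : (#(P i) : ℝ) ≤ 2 ^ (#(X (i + 1)) - #(X i)) := by
      exact_mod_cast (card_le_card (hPX i hi)).trans_eq (card_Icc_finset (mono i.le_succ))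
    have half : (2 : ℝ) ^ ℓ < 2 ^ (#(X (i + 1)) - #(X i) + 1) := by
      rw [pow_succ]
      linarith [hP.half_lt_card (by positivity) hi]
    have := (pow_lt_pow_iff_right₀ one_lt_two).1 half
    have := card_le_card (mono (Nat.le_add_right i 1))
    omega
  have steps {i j : ℕ} (hij : i ≤ j) (hj : j ≤ k) : #(X i) + (j - i) * ℓ ≤ #(X j) := by
    induction j, hij using Nat.le_induction with
    | base => simp
    | succ j hij ih =>
      rw [Nat.succ_sub hij, Nat.succ_mul, ← add_assoc]
      exact (Nat.add_le_add_right (ih (Nat.le_of_succ_le hj)) ℓ).trans (step hj)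
  refine ⟨X, ⟨mono, zero, top, fun i hi => le_antisymm ?_ ?_⟩, hPX⟩
  · have := steps hi le_rfl
    rw [top, card_univ, hα, Nat.sub_mul] at this
    have := Nat.mul_le_mul_right ℓ hi
    omega
  · have := steps i.zero_le hi
    rwa [zero, card_empty, zero_add, Nat.sub_zero] at this

end IsAlmostTower

lemma IsTowerChain.eq_towerFamily {α : Type*} [Fintype α] [DecidableEq α] {k ℓ : ℕ}
    {X : ℕ → Finset α} (hX : IsTowerChain k ℓ X) (hk : 0 < k)
    (hℓ : 2 * (k * Fintype.card α ^ 2) + k < 2 ^ (ℓ / 2)) {ℱ : Finset (Finset α)}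
    (hℱ : #ℱ = k * (2 ^ ℓ - 1) + 1)
    (hmax : ∀ 𝒢 : Finset (Finset α), #𝒢 = #ℱ →
      #(interedges (· ⊂ ·) 𝒢 𝒢) ≤ #(interedges (· ⊂ ·) ℱ ℱ))
    (hsdiff : 16 * #(ℱ \ towerFamily k X) ≤ 2 ^ ℓ) : ℱ = towerFamily k X := by
  set 𝒯 := towerFamily k X
  have h𝒯 : #ℱ = #𝒯 := hℱ.trans (hX.card_towerFamily hk).symm
  have hcomm : #(ℱ \ 𝒯) = #(𝒯 \ ℱ) := card_sdiff_comm h𝒯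
  have hmul : k * (2 ^ ℓ - 1) + k = k * 2 ^ ℓ := by
    rw [← Nat.mul_succ, Nat.succ_eq_add_one, Nat.sub_add_cancel Nat.one_le_two_pow]
  suffices h : ℱ \ 𝒯 = ∅ from eq_of_subset_of_card_le (sdiff_eq_empty_iff_subset.1 h) h𝒯.ge
  refine eq_empty_of_forall_notMem fun F hF => ?_
  have hF𝒯 {F : Finset α} (hF : F ∈ ℱ \ 𝒯) : F ∉ 𝒯 := (mem_sdiff.1 hF).2
  obtain ⟨A, hA⟩ : (𝒯 \ ℱ).Nonempty := card_pos.1 (hcomm ▸ card_pos.2 ⟨F, hF⟩)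
  have lower : k * (2 ^ ℓ - 1) + 2 ^ (ℓ / 2) ≤ #(comparables A 𝒯) + 2 ^ ℓ :=
    hX.mul_add_two_pow_half_le_card_comparables (mem_sdiff.1 hA).1
  have near : ℱ \ 𝒯 ⊆ nearFamily k X := fun F hF => by
    by_contra hF'
    have upper : 4 * #(comparables F 𝒯) + 5 * 2 ^ ℓ ≤ 4 * (k * 2 ^ ℓ) :=
      hX.four_mul_card_comparables_add_le hk (hF𝒯 hF) hF'
    have exchange := card_comparables_le_add hmax hF hA
    omega
  have few := (card_le_card near).trans (card_nearFamily_le k X)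
  have upper : #(comparables F 𝒯) + 2 ^ ℓ ≤ k * 2 ^ ℓ :=
    hX.card_comparables_add_two_pow_le hk (hF𝒯 hF)
  have exchange := card_comparables_le_add hmax hF hA
  omega

lemma IsAlmostTower.exists_eq_towerFamily {α : Type*} [Fintype α] [DecidableEq α] {k ℓ : ℕ}
    {P : ℕ → Finset (Finset α)} (hP : IsAlmostTower k (2 ^ ℓ) P) (hk : 0 < k)
    (hα : Fintype.card α = k * ℓ) (hℓ : 2 * (k * (k * ℓ) ^ 2) + k < 2 ^ (ℓ / 2))
    {ℱ : Finset (Finset α)} (hPℱ : ∀ i, P i ⊆ ℱ) (hℱ : #ℱ = k * (2 ^ ℓ - 1) + 1)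
    (hmax : ∀ 𝒢 : Finset (Finset α), #𝒢 = #ℱ →
      #(interedges (· ⊂ ·) 𝒢 𝒢) ≤ #(interedges (· ⊂ ·) ℱ ℱ)) :
    ∃ X, IsTowerChain k ℓ X ∧ ℱ = towerFamily k X := by
  obtain ⟨X, hX, hPX⟩ := hP.exists_isTowerChain hk.ne' hα
  refine ⟨X, hX, hX.eq_towerFamily hk (hα ▸ hℓ) hℱ hmax ?_⟩
  have hP𝒯 (i : ℕ) (hi : i < k) : P i ⊆ towerFamily k X := (hPX i hi).trans
    (subset_biUnion_of_mem (fun i => Icc (X i) (X (i + 1))) (mem_range.2 hi))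
  have card_le : #ℱ ≤ k * 2 ^ ℓ := by
    have := Nat.le_mul_of_pos_right k (Nat.two_pow_pos ℓ)
    rw [hℱ, Nat.mul_sub_one]
    omega
  exact_mod_cast hP.sixteen_mul_card_sdiff_le hk.ne' hPℱ hP𝒯 (by exact_mod_cast card_le)

lemma IsTowerChain.isTower {k ℓ : ℕ} (hk : 0 < k) {X : ℕ → Finset (Fin (k * ℓ))}
    (hX : IsTowerChain k ℓ X) : IsTower (k * ℓ) k (towerFamily k X) := by
  refine ⟨X, hX.zero, hX.top, fun i hi => ?_, fun i _ => hX.mono i.le_succ, ?_⟩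
  · rw [hX.card i hi, Nat.mul_div_cancel_left ℓ hk]
  · ext F
    rw [mem_towerFamily, mem_filter_univ]
    constructor
    · rintro ⟨i, hi, hF⟩
      exact ⟨i + 1, mem_Icc.2 ⟨i.succ_pos, hi⟩, hF⟩
    · rintro ⟨i, hi, hF⟩
      obtain ⟨hi1, hik⟩ := mem_Icc.1 hi
      exact ⟨i - 1, by omega, by rwa [Nat.sub_add_cancel hi1]⟩

lemma compCount_eq_card_interedges {n : ℕ} (ℱ : Finset (Finset (Fin n))) :
    compCount ℱ = #(interedges (· ⊂ ·) ℱ ℱ) :=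
  rfl

lemma compCount_le_maxComp {n : ℕ} (ℱ : Finset (Finset (Fin n))) :
    compCount ℱ ≤ maxComp n #ℱ :=
  le_sup (mem_powersetCard.2 ⟨subset_univ ℱ, rfl⟩)

theorem stmt6 (k : ℕ) (hk : 2 ≤ k) :
    ∃ n₀ : ℕ, ∀ n ≥ n₀, k ∣ n →
      ∀ ℱ : Finset (Finset (Fin n)),
        ℱ.card = k * 2 ^ (n / k) - k + 1 →
        compCount ℱ = maxComp n (k * 2 ^ (n / k) - k + 1) →
        IsTower n k ℱ := by
  have hk0 : 0 < k := by omega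
  obtain ⟨L, hL⟩ := eventually_atTop.1
    ((eventually_exists_isAlmostTower.{0} hk).and (eventually_mul_sq_add_lt_two_pow_half k))
  refine ⟨k * L, ?_⟩
  rintro _ hn ⟨ℓ, rfl⟩ ℱ hcard hℱ
  rw [Nat.mul_div_cancel_left ℓ hk0, ← Nat.mul_sub_one] at hcard hℱ
  obtain ⟨stability, growth⟩ := hL ℓ (Nat.le_of_mul_le_mul_left hn hk0)
  have hmax (𝒢 : Finset (Finset (Fin (k * ℓ)))) (h𝒢 : #𝒢 = #ℱ) :
      #(interedges (· ⊂ ·) 𝒢 𝒢) ≤ #(interedges (· ⊂ ·) ℱ ℱ) := by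
    rw [← compCount_eq_card_interedges, ← compCount_eq_card_interedges, hℱ, ← hcard, ← h𝒢]
    exact compCount_le_maxComp 𝒢
  have hX₀ := isTowerChain_val_lt k ℓ
  have many := (hX₀.choose_two_mul_le_card_interedges hk0).trans
    (hmax _ ((hX₀.card_towerFamily hk0).trans hcard.symm))
  rw [← card_interedges_swap] at many
  obtain ⟨P, hPℱ, hP⟩ := stability (Fin (k * ℓ)) (Fintype.card_fin _) ℱ hcard many
  obtain ⟨X, hX, rfl⟩ :=
    hP.exists_eq_towerFamily hk0 (Fintype.card_fin _) growth hPℱ hcard hmax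
  exact hX.isTower hk0
end

section
/- For every ε > 0 there exist ℓ₀ and n₀ such that for all integers ℓ ≥ ℓ₀ and n ≥ n₀ with nℓ ≤ 2^n, every family ℱ of nℓ subsets of [n] satisfies i(ℱ) ≥ (1/2 − ε)·n·ℓ²·log ℓ; that is, i(n, nℓ) ≥ (1/2 − ε)·n·ℓ²·log ℓ. -/
open Finset

/-- `incompCount ℱ = i(ℱ)` is the number of incomparable (unordered, distinct) pairs in `ℱ`. -/
def incompCount {n : ℕ} (ℱ : Finset (Finset (Fin n))) : ℕ :=
  ℱ.card.choose 2 - compCount ℱ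

/-!
Let `N` be the number of ordered noncomparable pairs of a family `F` of `m` sets, diagonal
included, and let `L = log ℓ`. The heart of the matter is local: if `ℓ ≤ m` and the sizes of the
members of `F` lie in a window of width `w L`, then `N` is at least about `m ^ 2 / (w + 2)`.
Suppose that `N` is smaller than `m ^ 2 / (p + 1)`, where `p` is just above `w`. Mirsky's theorem,
applied to a random sample, shows that a positive proportion of the `(p + 2)`-tuples in `F` are
chains, so for some `A ⊆ B` in `F` a positive proportion `c` of the `p`-tuples are chains between
`A` and `B`. Replacing every entry of a `p`-tuple by a block of `t` independent ones, Jensen's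
inequality gives a proportion at least `c ^ (t ^ p)` of tuples of blocks all of whose transversals
are such chains. In these, the intervals spanned by the `p` blocks are consecutive, so some block
lies in an interval of dimension at most `w L / p`. Such an interval has at most `ℓ ^ γ` elements
for some fixed `γ < 1`, so it catches all `t` entries of the block with probability at most
`ℓ ^ (-(1 - γ) t)`, which for large `t` beats the number of intervals, a power of `ℓ`. This is
absurd for large `ℓ`.

If `n` is large compared with `L`, cut the family by size into blocks of about `R ℓ L` sets. The
widths of the blocks add up to at most `n`, so on average they are about `R L`, `w ↦ 1 / (w + 2)`
may be replaced by its tangent at `R`, and the local bounds sum to about `n ℓ ^ 2 L` once `R` is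
large. If instead `n` is at most a constant multiple of `L`, the whole cube is a single interval,
the chains need not be anchored at `A` and `B`, and the local bound improves from `m ^ 2 / (w + 2)`
to `m ^ 2 / w` with `w = n / L`, which is again `n ℓ ^ 2 L` for `m = n ℓ`.
-/

open scoped BigOperators

section Density

variable {α β ι κ : Type*} [Fintype α] [Fintype β] [Fintype ι] [Fintype κ]

lemma dens_filter_comp_equiv (e : α ≃ β) (P : β → Prop) [DecidablePred P] :
    ({a | P (e a)} : Finset α).dens = ({b | P b} : Finset β).dens := by
  rw [← dens_map_equiv e]
  congr 1
  ext b
  simp [Finset.mem_map_equiv]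

lemma dens_filter_prod (P : α × β → Prop) [DecidablePred P] :
    ({z | P z} : Finset (α × β)).dens = 𝔼 a, ({b | P (a, b)} : Finset β).dens := by
  simp only [dens, Fintype.expect_eq_sum_div_card, card_filter, Fintype.sum_prod_type,
    Fintype.card_prod, Nat.cast_sum, Nat.cast_mul, sum_div, div_div,
    mul_comm (Fintype.card α : ℚ≥0)]

lemma exists_dens_filter_prod_le [Nonempty α] (P : α × β → Prop) [DecidablePred P] :
    ∃ a, ({z | P z} : Finset (α × β)).dens ≤ ({b | P (a, b)} : Finset β).dens := by
  simpa using exists_le_of_le_expect univ_nonempty (dens_filter_prod P).le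

lemma mul_dens_filter_le_dens_filter_prod (c : ℚ≥0) (P : α × β → Prop) [DecidablePred P] :
    c * ({a | c ≤ ({b | P (a, b)} : Finset β).dens} : Finset α).dens ≤
      ({z | P z} : Finset (α × β)).dens := by
  rw [dens_filter_prod, Fintype.expect_eq_sum_div_card, dens, ← mul_div_assoc, card_filter,
    Nat.cast_sum, mul_sum]
  gcongr with a
  split_ifs with ha <;> simp [ha]

lemma expect_pow_le_expect_pow [Nonempty ι] (f : ι → ℚ≥0) (k : ℕ) :
    (𝔼 i, f i) ^ k ≤ 𝔼 i, f i ^ k := by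
  obtain _ | k := k
  · simp
  · simpa [Fintype.expect_eq_sum_div_card, div_pow, pow_succ (Fintype.card ι : ℚ≥0), ← div_div]
      using div_le_div_of_nonneg_right
        (pow_sum_div_card_le_sum_pow (s := univ) (fun i _ ↦ zero_le (a := f i)) k)
        (zero_le (a := (Fintype.card ι : ℚ≥0)))

lemma dens_filter_forall [DecidableEq κ] (P : α → Prop) [DecidablePred P] :
    ({g | ∀ k, P (g k)} : Finset (κ → α)).dens =
      ({a | P a} : Finset α).dens ^ Fintype.card κ := by
  have hpi : ({g | ∀ k, P (g k)} : Finset (κ → α)) = Fintype.piFinset fun _ ↦ {a | P a} := by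
    ext g
    simp
  simp [hpi, dens, Fintype.card_piFinset, div_pow]

lemma dens_filter_comp_injective [DecidableEq ι] [DecidableEq κ] [Nonempty α] {σ : ι → κ}
    (hσ : σ.Injective) (R : (ι → α) → Prop) [DecidablePred R] :
    ({X | R (X ∘ σ)} : Finset (κ → α)).dens = ({x | R x} : Finset (ι → α)).dens := by
  -- Exchanging `x` with the restriction of `X` along `σ` is an involution on the pairs `(x, X)`.
  let swap : (ι → α) × (κ → α) → (ι → α) × (κ → α) :=
    fun z ↦ (z.2 ∘ σ, Function.extend σ z.1 z.2)
  have swap_swap : Function.Involutive swap := by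
    rintro ⟨x, X⟩
    refine Prod.ext (funext fun i ↦ hσ.extend_apply ..) (funext fun k ↦ ?_)
    by_cases hk : ∃ i, σ i = k
    · obtain ⟨i, rfl⟩ := hk
      exact hσ.extend_apply ..
    · simp only [swap, Function.extend_apply' _ _ _ hk]
  have hcard : #((univ : Finset (ι → α)) ×ˢ ({X | R (X ∘ σ)} : Finset (κ → α))) =
      #(({x | R x} : Finset (ι → α)) ×ˢ (univ : Finset (κ → α))) := by
    refine card_equiv swap_swap.toPerm fun z ↦ ?_
    simp [swap]
  rw [card_product, card_product, card_univ, card_univ] at hcard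
  rw [dens, dens, div_eq_div_iff (by simp) (by simp)]
  exact_mod_cast (mul_comm _ _).trans hcard

lemma dens_filter_prod_pow_le [DecidableEq κ] [Nonempty β] (P : α × β → Prop) [DecidablePred P] :
    ({z | P z} : Finset (α × β)).dens ^ Fintype.card κ ≤
      ({z | ∀ k, P (z.1 k, z.2)} : Finset ((κ → α) × β)).dens :=
  calc ({z | P z} : Finset (α × β)).dens ^ Fintype.card κ
      = (𝔼 b, ({a | P (a, b)} : Finset α).dens) ^ Fintype.card κ := by
        rw [← dens_filter_comp_equiv (Equiv.prodComm β α), dens_filter_prod]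
        rfl
    _ ≤ 𝔼 b, ({a | P (a, b)} : Finset α).dens ^ Fintype.card κ := expect_pow_le_expect_pow _ _
    _ = 𝔼 b, ({g | ∀ k, P (g k, b)} : Finset (κ → α)).dens :=
        expect_congr rfl fun b _ ↦ (dens_filter_forall fun a ↦ P (a, b)).symm
    _ = ({z | ∀ k, P (z.1 k, z.2)} : Finset ((κ → α) × β)).dens := by
        rw [← dens_filter_comp_equiv (Equiv.prodComm β (κ → α)), dens_filter_prod]
        rfl

lemma dens_filter_fin_cons {p : ℕ} (P : (Fin (p + 1) → α) → Prop) [DecidablePred P] :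
    ({z | P (Fin.cons z.1 z.2)} : Finset (α × (Fin p → α))).dens =
      ({x | P x} : Finset (Fin (p + 1) → α)).dens :=
  dens_filter_comp_equiv (Fin.consEquiv fun _ ↦ α) P

lemma dens_filter_apply [DecidableEq ι] [Nonempty α] (i : ι) (P : α → Prop) [DecidablePred P] :
    ({X | P (X i)} : Finset (ι → α)).dens = ({a | P a} : Finset α).dens :=
  (dens_filter_comp_injective (σ := fun _ : Unit ↦ i) (fun _ _ _ ↦ rfl) fun x ↦ P (x ())).trans <|
    dens_filter_comp_equiv (Equiv.funUnique Unit α) P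

open scoped Classical in
lemma dens_pow_le_dens_forall_apply [DecidableEq κ] [Nonempty α] {p : ℕ}
    (Q : (Fin p → α) → Prop) :
    ({x | Q x} : Finset (Fin p → α)).dens ^ Fintype.card κ ^ p ≤
      ({X | ∀ σ : Fin p → κ, Q fun i ↦ X i (σ i)} : Finset (Fin p → κ → α)).dens := by
  induction p with
  | zero =>
    by_cases hQ : Q ![]
    all_goals simp [Subsingleton.elim _ ![], hQ]
  | succ p ih =>
    have expand_forall (X : Fin (p + 1) → κ → α) :
        (∀ σ : Fin (p + 1) → κ, Q fun i ↦ X i (σ i)) ↔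
          ∀ (τ : Fin p → κ) k, Q (Fin.cons (X 0 k) fun i ↦ X i.succ (τ i)) := by
      rw [forall_comm, Fin.forall_fin_succ_pi]
      refine forall₂_congr fun k τ ↦ ?_
      congr! 1
      ext i
      cases i using Fin.cases <;> rfl
    let onePoint (z : α × (Fin p → α)) : Prop := Q (Fin.cons z.1 z.2)
    let oneBlock (z : (κ → α) × (Fin p → α)) : Prop := ∀ k, onePoint (z.1 k, z.2)
    let blocks (z : (κ → α) × (Fin p → κ → α)) : Prop :=
      ∀ τ : Fin p → κ, oneBlock (z.1, fun i ↦ z.2 i (τ i))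
    calc ({x | Q x} : Finset (Fin (p + 1) → α)).dens ^ Fintype.card κ ^ (p + 1)
        = (({z | onePoint z} : Finset (α × (Fin p → α))).dens ^ Fintype.card κ)
            ^ Fintype.card κ ^ p := by
          rw [← dens_filter_fin_cons, ← pow_mul, pow_succ']
      _ ≤ ({z | oneBlock z} : Finset ((κ → α) × (Fin p → α))).dens ^ Fintype.card κ ^ p := by
          gcongr
          exact dens_filter_prod_pow_le onePoint
      _ ≤ 𝔼 g, ({y | oneBlock (g, y)} : Finset (Fin p → α)).dens ^ Fintype.card κ ^ p := by
          rw [dens_filter_prod]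
          exact expect_pow_le_expect_pow _ _
      _ ≤ 𝔼 g, ({Y | blocks (g, Y)} : Finset (Fin p → κ → α)).dens :=
          expect_le_expect fun g _ ↦ by convert ih fun y ↦ oneBlock (g, y)
      _ = ({z | blocks z} : Finset ((κ → α) × (Fin p → κ → α))).dens := by
          rw [dens_filter_prod]
      _ = ({X | ∀ σ : Fin (p + 1) → κ, Q fun i ↦ X i (σ i)} :
            Finset (Fin (p + 1) → κ → α)).dens := by
          rw [← dens_filter_fin_cons]
          simp [expand_forall, blocks, oneBlock, onePoint]

end Density

section Supersaturation

variable {α β : Type*} [Preorder α]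

open scoped Classical in
/-- The ordered pairs of elements of `F` neither of which is strictly below the other. The diagonal
is included, so that in a partial order this counts each incomparable pair twice and each element
once; lower bounds on incomparable pairs are proved in this form. -/
noncomputable def noncompPairs (F : Finset α) : Finset (α × α) :=
  {z ∈ F ×ˢ F | ¬ z.1 < z.2 ∧ ¬ z.2 < z.1}

lemma mem_noncompPairs {F : Finset α} {z : α × α} :
    z ∈ noncompPairs F ↔ (z.1 ∈ F ∧ z.2 ∈ F) ∧ ¬ z.1 < z.2 ∧ ¬ z.2 < z.1 := by
  simp [noncompPairs]

lemma one_le_mul_dens_filter_apply_eq_apply [Fintype β] [Nonempty β] {r : ℕ} (c : β → Fin r) :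
    1 ≤ r * ({z | c z.1 = c z.2} : Finset (β × β)).dens := by
  have hfiber : #{z : β × β | c z.1 = c z.2} = ∑ i, #{b | c b = i} ^ 2 := by
    rw [card_eq_sum_card_fiberwise (f := fun z ↦ c z.1) (t := univ) (by simp)]
    refine sum_congr rfl fun i _ ↦ ?_
    rw [sq, ← card_product]
    congr 1
    ext z
    simp only [mem_filter, mem_univ, true_and, mem_product]
    grind
  have hcard : Fintype.card β ^ 2 ≤ r * #{z : β × β | c z.1 = c z.2} :=
    calc Fintype.card β ^ 2 = (∑ i, #{b | c b = i}) ^ 2 := by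
          rw [← card_univ, card_eq_sum_card_fiberwise (f := c) (t := univ) (by simp)]
      _ ≤ #(univ : Finset (Fin r)) * ∑ i, #{b | c b = i} ^ 2 := sq_sum_le_card_mul_sum_sq
      _ = r * #{z : β × β | c z.1 = c z.2} := by rw [hfiber, card_univ, Fintype.card_fin]
  rw [dens, ← mul_div_assoc, one_le_div (by simp [Fintype.card_pos]), Fintype.card_prod, ← sq]
  exact_mod_cast hcard

lemma exists_strictMono_fin_of_le_height {r : ℕ} {a : α} (h : r ≤ Order.height a) :
    ∃ x : Fin (r + 1) → α, StrictMono x := by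
  obtain ⟨p, -, rfl⟩ := Order.exists_series_of_le_height a h
  exact ⟨p, p.strictMono⟩

lemma exists_coloring_ne_of_forall_not_strictMono {r : ℕ}
    (h : ∀ x : Fin (r + 1) → α, ¬ StrictMono x) :
    ∃ c : α → Fin r, ∀ a b, a < b → c a ≠ c b := by
  have height_lt (a : α) : Order.height a < r := by
    by_contra! ha
    obtain ⟨x, hx⟩ := exists_strictMono_fin_of_le_height ha
    exact h x hx
  have coe_toNat (a : α) : ((Order.height a).toNat : ℕ∞) = Order.height a :=
    ENat.natCast_toNat (height_lt a).ne_top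
  refine ⟨fun a ↦ ⟨(Order.height a).toNat, ?_⟩, fun a b hab hc ↦ ?_⟩
  · exact_mod_cast (coe_toNat a).trans_lt (height_lt a)
  · have hlt := Order.height_strictMono hab (height_lt a).lt_top
    rw [← coe_toNat a, ← coe_toNat b, Fin.mk.inj hc] at hlt
    exact lt_irrefl _ hlt

lemma one_le_mul_dens_noncompPairs_of_forall_not_strictMono [Fintype α] [Nonempty α] {r : ℕ}
    (h : ∀ x : Fin (r + 1) → α, ¬ StrictMono x) :
    1 ≤ r * (noncompPairs (univ : Finset α)).dens := by
  obtain ⟨c, hc⟩ := exists_coloring_ne_of_forall_not_strictMono h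
  refine (one_le_mul_dens_filter_apply_eq_apply c).trans ?_
  gcongr
  intro z hz
  rw [mem_filter] at hz
  exact mem_noncompPairs.2
    ⟨by simp, fun hlt ↦ hc _ _ hlt hz.2, fun hlt ↦ hc _ _ hlt hz.2.symm⟩

lemma card_noncompPairs_univ_coe (F : Finset α) :
    #(noncompPairs (univ : Finset F)) = #(noncompPairs F) := by
  rw [← card_map ((Function.Embedding.subtype _).prodMap (Function.Embedding.subtype _))]
  congr 1
  ext ⟨a, b⟩
  simp [mem_noncompPairs, and_comm, and_left_comm, and_assoc]

variable [Fintype α] [Nonempty α]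

open scoped Classical in
lemma dens_exists_strictMono_comp_le (q r : ℕ) :
    ({X | ∃ σ : Fin r → Fin q, StrictMono (X ∘ σ)} : Finset (Fin q → α)).dens ≤
      q ^ r * ({x | StrictMono x} : Finset (Fin r → α)).dens := by
  have dens_le (σ : Fin r → Fin q) :
      ({X | StrictMono (X ∘ σ)} : Finset (Fin q → α)).dens ≤
        ({x | StrictMono x} : Finset (Fin r → α)).dens := by
    by_cases hσ : σ.Injective
    · exact (dens_filter_comp_injective hσ fun x : Fin r → α ↦ StrictMono x).le
    · rw [filter_false_of_mem fun X _ hX ↦ hσ (hX.injective.of_comp), dens_empty]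
      exact zero_le
  calc ({X | ∃ σ : Fin r → Fin q, StrictMono (X ∘ σ)} : Finset (Fin q → α)).dens
      = (univ.biUnion fun σ : Fin r → Fin q ↦
          ({X | StrictMono (X ∘ σ)} : Finset (Fin q → α))).dens := by
        congr 1
        ext X
        simp
    _ ≤ ∑ σ : Fin r → Fin q, ({X | StrictMono (X ∘ σ)} : Finset (Fin q → α)).dens :=
        dens_biUnion_le
    _ ≤ ∑ _σ : Fin r → Fin q, ({x | StrictMono x} : Finset (Fin r → α)).dens :=
        sum_le_sum fun σ _ ↦ dens_le σ
    _ = q ^ r * ({x | StrictMono x} : Finset (Fin r → α)).dens := by simp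

open scoped Classical in
lemma dens_noncomp_apply_le {ι : Type*} [Fintype ι] [DecidableEq ι] (i j : ι) :
    ({X | ¬ X i < X j ∧ ¬ X j < X i} : Finset (ι → α)).dens ≤
      (if i = j then 1 else 0) + (noncompPairs (univ : Finset α)).dens := by
  split_ifs with hij
  · exact dens_le_one.trans le_self_add
  · have hinj : Function.Injective ![i, j] := by
      intro a b
      fin_cases a <;> fin_cases b <;> simp [hij, Ne.symm hij]
    have hmarginal := dens_filter_comp_injective (α := α) hinj
      fun x ↦ ¬ x 0 < x 1 ∧ ¬ x 1 < x 0
    have hpairs := dens_filter_comp_equiv (finTwoArrowEquiv α)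
      fun z ↦ ¬ z.1 < z.2 ∧ ¬ z.2 < z.1
    rw [zero_add, noncompPairs, univ_product_univ]
    exact (hmarginal.trans hpairs).le

open scoped Classical in
lemma dens_noncomp_sample_le (q : ℕ) :
    ({z | ¬ z.1 z.2.1 < z.1 z.2.2 ∧ ¬ z.1 z.2.2 < z.1 z.2.1} :
      Finset ((Fin q → α) × Fin q × Fin q)).dens ≤
        1 / q + (noncompPairs (univ : Finset α)).dens := by
  obtain rfl | hq := Nat.eq_zero_or_pos q
  · simp
  have : NeZero q := ⟨hq.ne'⟩
  let noncomp (z : (Fin q × Fin q) × (Fin q → α)) : Prop :=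
    ¬ z.2 z.1.1 < z.2 z.1.2 ∧ ¬ z.2 z.1.2 < z.2 z.1.1
  calc _ = ({z | noncomp z} : Finset ((Fin q × Fin q) × (Fin q → α))).dens :=
        dens_filter_comp_equiv (Equiv.prodComm _ _) noncomp
    _ = 𝔼 s, ({X | noncomp (s, X)} : Finset (Fin q → α)).dens := dens_filter_prod noncomp
    _ ≤ 𝔼 s : Fin q × Fin q,
        ((if s.1 = s.2 then 1 else 0) + (noncompPairs (univ : Finset α)).dens) :=
        expect_le_expect fun s _ ↦ dens_noncomp_apply_le s.1 s.2
    _ = 1 / q + (noncompPairs (univ : Finset α)).dens := by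
      rw [expect_add_distrib, Fintype.expect_const, Fintype.expect_eq_sum_div_card,
        Fintype.sum_prod_type]
      simp

open scoped Classical in
/-- Sample `q` points: either they contain a chain of length `r + 1`, or Mirsky's theorem makes a
proportion at least `1 / r` of the pairs of samples noncomparable. -/
lemma one_le_dens_strictMono_add_dens_noncompPairs {q : ℕ} (hq : 0 < q) (r : ℕ) :
    1 ≤ q ^ (r + 1) * ({x | StrictMono x} : Finset (Fin (r + 1) → α)).dens +
      r * (1 / q + (noncompPairs (univ : Finset α)).dens) := by
  have : NeZero q := ⟨hq.ne'⟩
  let hasChain (X : Fin q → α) : Prop := ∃ σ : Fin (r + 1) → Fin q, StrictMono (X ∘ σ)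
  let noncomp (z : (Fin q → α) × Fin q × Fin q) : Prop :=
    ¬ z.1 z.2.1 < z.1 z.2.2 ∧ ¬ z.1 z.2.2 < z.1 z.2.1
  have mirsky (X : Fin q → α) (hX : ¬ hasChain X) :
      1 ≤ r * ({s | noncomp (X, s)} : Finset (Fin q × Fin q)).dens := by
    let _ : Preorder (Fin q) := .lift X
    have h := one_le_mul_dens_noncompPairs_of_forall_not_strictMono (α := Fin q) (r := r)
      fun σ hσ ↦ hX ⟨σ, fun _ _ hij ↦ hσ hij⟩
    rwa [noncompPairs, univ_product_univ] at h
  have dens_not_hasChain :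
      ({X | ¬ hasChain X} : Finset (Fin q → α)).dens ≤ r * ({z | noncomp z} : Finset _).dens := by
    obtain rfl | hr := Nat.eq_zero_or_pos r
    · rw [filter_false_of_mem fun X _ hX ↦ by simpa using mirsky X hX]
      simp
    rw [← div_le_iff₀' (by positivity), div_eq_inv_mul]
    refine le_trans ?_ (mul_dens_filter_le_dens_filter_prod (r : ℚ≥0)⁻¹ noncomp)
    gcongr with X
    exact fun hX ↦ (inv_le_iff_one_le_mul₀' (by positivity)).2 (mirsky X hX)
  calc (1 : ℚ≥0) = ({X | hasChain X} : Finset (Fin q → α)).dens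
          + ({X | ¬ hasChain X} : Finset (Fin q → α)).dens := by
        rw [dens_filter_add_dens_filter_not_eq_dens, dens_univ]
    _ ≤ _ := by
        gcongr
        · exact dens_exists_strictMono_comp_le q (r + 1)
        · exact dens_not_hasChain.trans (by gcongr; exact dens_noncomp_sample_le q)

open scoped Classical in
lemma exists_pos_le_dens_strictMono (r : ℕ) {γ : ℝ} (hγ : γ < 1) :
    ∃ c : ℝ, 0 < c ∧ ∀ {α : Type*} [Preorder α] (F : Finset α), F.Nonempty →
      r * (#(noncompPairs F) : ℝ) ≤ γ * (#F : ℝ) ^ 2 →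
        c ≤ ({x | StrictMono x} : Finset (Fin (r + 1) → F)).dens := by
  obtain ⟨q, hq⟩ := exists_nat_gt (2 * r / (1 - γ))
  have hq0 : 0 < q := Nat.cast_pos.1 (lt_of_le_of_lt (by have := sub_pos.2 hγ; positivity) hq)
  have hq0' : (0 : ℝ) < q := mod_cast hq0
  have hrq : r * (1 / q : ℝ) ≤ (1 - γ) / 2 := by
    rw [div_lt_iff₀ (sub_pos.2 hγ)] at hq
    rw [mul_one_div, div_le_iff₀ hq0']
    linarith
  refine ⟨(1 - γ) / 2 / q ^ (r + 1), by have := sub_pos.2 hγ; positivity,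
    fun {α} _ F hF hFγ ↦ ?_⟩
  have : Nonempty F := hF.to_subtype
  have hdens : r * ((noncompPairs (univ : Finset F)).dens : ℝ) ≤ γ := by
    have : (0 : ℝ) < #F := mod_cast hF.card_pos
    rw [dens, card_noncompPairs_univ_coe]
    push_cast [Fintype.card_prod, Fintype.card_coe]
    rw [← mul_div_assoc, div_le_iff₀ (by positivity)]
    linarith
  have hsuper : (1 : ℝ) ≤ q ^ (r + 1) * ({x | StrictMono x} : Finset (Fin (r + 1) → F)).dens +
      r * (1 / q + (noncompPairs (univ : Finset F)).dens) := by
    have h := NNRat.cast_mono (K := ℝ) <|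
      one_le_dens_strictMono_add_dens_noncompPairs (α := F) hq0 r
    push_cast at h ⊢
    exact h
  rw [div_le_iff₀ (by positivity)]
  linarith

end Supersaturation

section Frames

/-- `IsChainIn a b x` says that `x` is a strictly increasing sequence of length `p` of elements of
the interval `[a, b]`. A large family of sets has few such sequences when the interval is short. -/
def IsChainIn {α : Type*} [Preorder α] (a b : α) {p : ℕ} (x : Fin p → α) : Prop :=
  StrictMono x ∧ ∀ i, x i ∈ Set.Icc a b

variable {V κ : Type*} [DecidableEq V]

lemma card_Icc_le_two_pow_card_sdiff (s t : Finset V) : #(Icc s t) ≤ 2 ^ #(t \ s) := by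
  by_cases hst : s ⊆ t
  · rw [card_Icc_finset hst, card_sdiff_of_subset hst]
  · simp [Icc_eq_empty hst]

lemma sum_card_sdiff_le {p : ℕ} {lo hi : Finset V} {I U : Fin p → Finset V} (hlo : ∀ i, lo ⊆ I i)
    (hhi : ∀ i, U i ⊆ hi) (hUI : ∀ i j, i < j → U i ⊆ I j) :
    ∑ i, #(U i \ I i) ≤ #(hi \ lo) := by
  have hdisj (i j : Fin p) (hij : i < j) : Disjoint (U i \ I i) (U j \ I j) :=
    disjoint_sdiff.mono_left <| sdiff_subset.trans (hUI i j hij)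
  rw [← card_biUnion fun i _ j _ hij ↦ hij.lt_or_gt.elim (hdisj i j) fun h ↦ (hdisj j i h).symm]
  exact card_le_card <| biUnion_subset.2 fun i _ ↦ sdiff_subset_sdiff (hhi i) (hlo i)

lemma exists_frame [Finite κ] [Nonempty κ] {p : ℕ} (hp : 0 < p) {lo hi : Finset V}
    {X : Fin p → κ → Finset V} (hX : ∀ σ : Fin p → κ, IsChainIn lo hi fun i ↦ X i (σ i)) :
    ∃ i, ∃ I ∈ Icc lo hi, ∃ U ∈ Icc lo hi,
      #(U \ I) ≤ #(hi \ lo) / p ∧ ∀ k, X i k ∈ Icc I U := by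
  have := Fintype.ofFinite κ
  have : NeZero p := ⟨hp.ne'⟩
  let I (i : Fin p) := univ.inf' univ_nonempty (X i)
  let U (i : Fin p) := univ.sup' univ_nonempty (X i)
  have hI_le (i : Fin p) (k : κ) : I i ≤ X i k := inf'_le _ (mem_univ k)
  have hle_U (i : Fin p) (k : κ) : X i k ≤ U i := le_sup' _ (mem_univ k)
  have hlo (i : Fin p) : lo ≤ I i := le_inf' _ _ fun k _ ↦ ((hX fun _ ↦ k).2 i).1
  have hhi (i : Fin p) : U i ≤ hi := sup'_le _ _ fun k _ ↦ ((hX fun _ ↦ k).2 i).2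
  have hIU (i : Fin p) : I i ≤ U i := (hI_le i (Classical.arbitrary κ)).trans (hle_U i _)
  have hUI (i j : Fin p) (hij : i < j) : U i ≤ I j := by
    refine sup'_le _ _ fun k _ ↦ le_inf' _ _ fun l _ ↦ ?_
    simpa [hij.ne] using ((hX fun m ↦ if m = j then l else k).1 hij).le
  have hsum : ∑ i, p * #(U i \ I i) ≤ ∑ _i : Fin p, #(hi \ lo) := by
    rw [← mul_sum, sum_const, card_univ, Fintype.card_fin, smul_eq_mul]
    exact Nat.mul_le_mul_left p (sum_card_sdiff_le hlo hhi hUI)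
  obtain ⟨i, -, hi⟩ := exists_le_of_sum_le univ_nonempty hsum
  refine ⟨i, I i, mem_Icc.2 ⟨hlo i, (hIU i).trans (hhi i)⟩, U i,
    mem_Icc.2 ⟨(hlo i).trans (hIU i), hhi i⟩, ?_, fun k ↦ mem_Icc.2 ⟨hI_le i k, hle_U i k⟩⟩
  exact (Nat.le_div_iff_mul_le hp).2 (by linarith)

lemma dens_filter_mem_Icc_le (F : Finset (Finset V)) (I U : Finset V) :
    ({A | (A : Finset V) ∈ Icc I U} : Finset F).dens ≤ 2 ^ #(U \ I) / #F := by
  rw [dens, Fintype.card_coe]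
  gcongr
  rw [← card_map (Function.Embedding.subtype _)]
  refine mod_cast (card_le_card fun A hA ↦ ?_).trans (card_Icc_le_two_pow_card_sdiff I U)
  simp only [mem_map, mem_filter] at hA
  obtain ⟨B, hB, rfl⟩ := hA
  exact hB.2

lemma dens_forall_mem_Icc_le [Fintype κ] [DecidableEq κ] {F : Finset (Finset V)} (hF : F.Nonempty)
    {p : ℕ} (i : Fin p) (I U : Finset V) :
    ({X | ∀ k, (X i k : Finset V) ∈ Icc I U} : Finset (Fin p → κ → F)).dens ≤
      (2 ^ #(U \ I) / #F) ^ Fintype.card κ := by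
  have : Nonempty F := hF.to_subtype
  calc _ = ({g | ∀ k, (g k : Finset V) ∈ Icc I U} : Finset (κ → F)).dens :=
        dens_filter_apply i fun g : κ → F ↦ ∀ k, (g k : Finset V) ∈ Icc I U
    _ = ({A | (A : Finset V) ∈ Icc I U} : Finset F).dens ^ Fintype.card κ :=
        dens_filter_forall fun A : F ↦ (A : Finset V) ∈ Icc I U
    _ ≤ _ := by
        gcongr
        exact dens_filter_mem_Icc_le F I U

open scoped Classical in
lemma dens_forall_isChainIn_le [Fintype κ] [DecidableEq κ] [Nonempty κ]
    {F : Finset (Finset V)} (hF : F.Nonempty) {p : ℕ} (hp : 0 < p) (lo hi : Finset V) :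
    ({X | ∀ σ : Fin p → κ, IsChainIn lo hi fun i ↦ (X i (σ i) : Finset V)} :
      Finset (Fin p → κ → F)).dens ≤
        p * 4 ^ #(hi \ lo) * (2 ^ (#(hi \ lo) / p) / #F) ^ Fintype.card κ := by
  let frames := (univ : Finset (Fin p)) ×ˢ Icc lo hi ×ˢ Icc lo hi
  let thin := {f ∈ frames | #(f.2.2 \ f.2.1) ≤ #(hi \ lo) / p}
  let inFrame (f : Fin p × Finset V × Finset V) : Finset (Fin p → κ → F) :=
    {X | ∀ k, (X f.1 k : Finset V) ∈ Icc f.2.1 f.2.2}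
  calc _ ≤ (thin.biUnion inFrame).dens := by
        gcongr
        intro X hX
        obtain ⟨i, I, hI, U, hU, hUI, hXi⟩ := exists_frame (X := fun i k ↦ (X i k : Finset V)) hp
          (mem_filter.1 hX).2
        exact mem_biUnion.2 ⟨(i, I, U), by simp_all [thin, frames], by simpa [inFrame] using hXi⟩
    _ ≤ ∑ f ∈ thin, (inFrame f).dens := dens_biUnion_le
    _ ≤ ∑ _f ∈ thin, (2 ^ (#(hi \ lo) / p) / #F : ℚ≥0) ^ Fintype.card κ := by
        refine sum_le_sum fun f hf ↦ (dens_forall_mem_Icc_le hF f.1 f.2.1 f.2.2).trans ?_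
        gcongr
        · exact one_le_two
        · exact (mem_filter.1 hf).2
    _ ≤ p * 4 ^ #(hi \ lo) * (2 ^ (#(hi \ lo) / p) / #F) ^ Fintype.card κ := by
        have hcard : #frames ≤ p * 4 ^ #(hi \ lo) := by
          rw [card_product, card_product, card_univ, Fintype.card_fin, show 4 = 2 * 2 from rfl,
            mul_pow]
          gcongr
          all_goals exact card_Icc_le_two_pow_card_sdiff lo hi
        rw [sum_const, nsmul_eq_mul]
        gcongr
        exact_mod_cast (card_le_card (filter_subset _ _)).trans hcard

open scoped Classical in
lemma dens_isChainIn_pow_le {F : Finset (Finset V)} (hF : F.Nonempty) {p t : ℕ} (hp : 0 < p)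
    (ht : 0 < t) (lo hi : Finset V) :
    ({x | IsChainIn lo hi fun i ↦ (x i : Finset V)} : Finset (Fin p → F)).dens ^ t ^ p ≤
      p * 4 ^ #(hi \ lo) * (2 ^ (#(hi \ lo) / p) / #F) ^ t := by
  have : Nonempty F := hF.to_subtype
  have : NeZero t := ⟨ht.ne'⟩
  simpa only [Fintype.card_fin] using
    (dens_pow_le_dens_forall_apply (κ := Fin t) fun x : Fin p → F ↦
      IsChainIn lo hi fun i ↦ (x i : Finset V)).trans (dens_forall_isChainIn_le hF hp lo hi)

lemma two_pow_le_rpow {k : ℕ} {x s : ℝ} (hx : 0 < x) (hk : k ≤ s * Real.logb 2 x) :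
    2 ^ k ≤ x ^ s :=
  calc (2 : ℝ) ^ k = 2 ^ (k : ℝ) := (Real.rpow_natCast 2 k).symm
    _ ≤ 2 ^ (Real.logb 2 x * s) := Real.rpow_le_rpow_of_exponent_le one_le_two (by linarith)
    _ = x ^ s := by rw [Real.rpow_mul two_pos.le, Real.rpow_logb two_pos (by norm_num) hx]

lemma four_pow_mul_pow_le {ℓ m d p t : ℕ} {γ : ℝ} (hp : 0 < p) (hγ : γ ≤ 1) (hℓ : 1 ≤ ℓ)
    (hℓm : ℓ ≤ m) (hd : d ≤ γ * p * Real.logb 2 ℓ) (ht : 2 * p + 1 ≤ (1 - γ) * t) :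
    (4 : ℝ) ^ d * (2 ^ (d / p) / m) ^ t ≤ 1 / ℓ := by
  have hℓ1 : (1 : ℝ) ≤ ℓ := mod_cast hℓ
  have hℓ0 : (0 : ℝ) < ℓ := by linarith
  have hp0 : (0 : ℝ) < p := mod_cast hp
  have hL : 0 ≤ Real.logb 2 ℓ := Real.logb_nonneg one_lt_two hℓ1
  have hframes : (4 : ℝ) ^ d ≤ (ℓ : ℝ) ^ (2 * p : ℝ) := by
    rw [show (4 : ℝ) = 2 ^ 2 by norm_num, ← pow_mul]
    refine two_pow_le_rpow hℓ0 ?_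
    push_cast
    nlinarith [mul_le_mul_of_nonneg_right hγ (mul_nonneg hp0.le hL)]
  have hframe : (2 : ℝ) ^ (d / p) / m ≤ (ℓ : ℝ) ^ (γ - 1) := by
    rw [Real.rpow_sub_one hℓ0.ne']
    gcongr
    refine two_pow_le_rpow hℓ0 (Nat.cast_div_le.trans ?_)
    rw [div_le_iff₀ hp0]
    linarith
  calc (4 : ℝ) ^ d * (2 ^ (d / p) / m) ^ t
      ≤ (ℓ : ℝ) ^ (2 * p : ℝ) * ((ℓ : ℝ) ^ (γ - 1)) ^ t := by gcongr
    _ = (ℓ : ℝ) ^ (2 * p + (γ - 1) * t) := by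
        rw [← Real.rpow_mul_natCast hℓ0.le, Real.rpow_add hℓ0]
    _ ≤ (ℓ : ℝ) ^ (-1 : ℝ) := Real.rpow_le_rpow_of_exponent_le hℓ1 (by linarith)
    _ = 1 / ℓ := by rw [Real.rpow_neg_one, one_div]

open Filter in
open scoped Classical in
lemma eventually_dens_isChainIn_lt {p : ℕ} (hp : 0 < p) {γ c : ℝ} (hγ : γ < 1) (hc : 0 < c) :
    ∀ᶠ ℓ : ℕ in atTop, ∀ {V : Type*} [DecidableEq V] (F : Finset (Finset V)) (lo hi : Finset V),
      ℓ ≤ #F → #(hi \ lo) ≤ γ * p * Real.logb 2 ℓ →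
        (({x | IsChainIn lo hi fun i ↦ (x i : Finset V)} : Finset (Fin p → F)).dens : ℝ) < c := by
  obtain ⟨t, ht⟩ := exists_nat_ge ((2 * p + 1) / (1 - γ))
  rw [div_le_iff₀' (sub_pos.2 hγ)] at ht
  have ht0 : 0 < t := Nat.cast_pos.1 <|
    (mul_pos_iff_of_pos_left (sub_pos.2 hγ)).1 (lt_of_lt_of_le (by positivity) ht)
  have hlim : Tendsto (fun ℓ : ℕ ↦ (p : ℝ) / ℓ) atTop (nhds 0) :=
    tendsto_const_div_atTop_nhds_zero_nat _
  filter_upwards [eventually_ge_atTop 1, hlim.eventually_lt_const (pow_pos hc (t ^ p))]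
    with ℓ hℓ hsmall V _ F lo hi hF hd
  have hcount := NNRat.cast_mono (K := ℝ) <|
    dens_isChainIn_pow_le (card_pos.1 (hℓ.trans hF)) hp ht0 lo hi
  simp only [NNRat.cast_pow, NNRat.cast_mul, NNRat.cast_div, NNRat.cast_natCast,
    NNRat.cast_ofNat] at hcount
  refine lt_of_pow_lt_pow_left₀ (t ^ p) hc.le (hcount.trans_lt (lt_of_le_of_lt ?_ hsmall))
  rw [mul_assoc, div_eq_mul_one_div (p : ℝ)]
  gcongr
  exact four_pow_mul_pow_le hp hγ.le hℓ hF hd ht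

end Frames

section LocalBounds

universe u

variable {α : Type*} [Preorder α]

lemma IsChainIn.of_strictMono_cons_snoc {a b : α} {p : ℕ} {x : Fin p → α}
    (h : StrictMono (Fin.cons a (Fin.snoc x b : Fin (p + 1) → α) : Fin (p + 2) → α)) :
    IsChainIn a b x := by
  refine ⟨fun i j hij ↦ ?_, fun i ↦ ⟨?_, ?_⟩⟩
  · simpa using h (a := i.castSucc.succ) (b := j.castSucc.succ) (by simpa using hij)
  · simpa using (h (a := 0) (b := i.castSucc.succ) (Fin.succ_pos _)).le
  · simpa using (h (a := i.castSucc.succ) (b := (Fin.last p).succ)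
      (Fin.succ_lt_succ_iff.2 (Fin.castSucc_lt_last i))).le

open scoped Classical in
lemma exists_dens_strictMono_le_dens_isChainIn [Fintype α] [Nonempty α] (p : ℕ) :
    ∃ a b : α, ({x | StrictMono x} : Finset (Fin (p + 2) → α)).dens ≤
      ({x | IsChainIn a b x} : Finset (Fin p → α)).dens := by
  obtain ⟨a, ha⟩ := exists_dens_filter_prod_le fun z : α × (Fin (p + 1) → α) ↦
    StrictMono (Fin.cons z.1 z.2 : Fin (p + 2) → α)
  obtain ⟨b, hb⟩ := exists_dens_filter_prod_le fun z : α × (Fin p → α) ↦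
    StrictMono (Fin.cons a (Fin.snoc z.2 z.1 : Fin (p + 1) → α) : Fin (p + 2) → α)
  refine ⟨a, b, ?_⟩
  rw [← dens_filter_fin_cons]
  refine ha.trans ?_
  rw [← dens_filter_comp_equiv (Fin.snocEquiv fun _ : Fin (p + 1) ↦ α)]
  refine hb.trans ?_
  gcongr with x
  exact IsChainIn.of_strictMono_cons_snoc

open Filter

lemma eventually_mul_sq_le_card_noncompPairs_of_card_mem {p : ℕ} (hp : 0 < p) {γ : ℝ}
    (hγ : γ < 1) :
    ∀ᶠ ℓ : ℕ in atTop, ∀ {V : Type u} (F : Finset (Finset V)) (a b : ℕ), ℓ ≤ #F →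
      (∀ A ∈ F, a ≤ #A ∧ #A ≤ b) → b - a ≤ γ * p * Real.logb 2 ℓ →
        γ * #F ^ 2 ≤ (p + 1) * #(noncompPairs F) := by
  classical
  obtain ⟨c, hc, hsuper⟩ := exists_pos_le_dens_strictMono (p + 1) hγ
  filter_upwards [eventually_dens_isChainIn_lt hp hγ hc, eventually_ge_atTop 1]
    with ℓ hfew hℓ V F a b hF hab hba
  have hF0 : F.Nonempty := card_pos.1 (hℓ.trans hF)
  have : Nonempty F := hF0.to_subtype
  by_contra! hN
  obtain ⟨A, B, hAB⟩ := exists_dens_strictMono_le_dens_isChainIn (α := F) p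
  have hmany : c ≤ (({x | IsChainIn (A : Finset V) B fun i ↦ (x i : Finset V)} :
      Finset (Fin p → F)).dens : ℝ) :=
    (hsuper F hF0 (by push_cast; exact hN.le)).trans (NNRat.cast_mono hAB)
  have hAB_sub : (A : Finset V) ⊆ B := by
    obtain ⟨x, hx⟩ := dens_pos.1 (NNRat.cast_pos.1 (hc.trans_le hmany))
    obtain ⟨hAx, hxB⟩ := (mem_filter.1 hx).2.2 ⟨0, hp⟩
    exact hAx.trans hxB
  have hcard : (#(B.1 \ A.1) : ℝ) ≤ b - a := by
    rw [cast_card_sdiff hAB_sub]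
    have hB : (#B.1 : ℝ) ≤ b := mod_cast (hab B B.2).2
    have hA : (a : ℝ) ≤ #A.1 := mod_cast (hab A A.2).1
    linarith
  exact (hfew F A B hF (hcard.trans hba)).not_ge hmany

lemma eventually_mul_sq_le_card_noncompPairs_of_card_univ_le (r : ℕ) {γ : ℝ} (hγ : γ < 1) :
    ∀ᶠ ℓ : ℕ in atTop, ∀ {V : Type u} [Fintype V] (F : Finset (Finset V)), ℓ ≤ #F →
      Fintype.card V ≤ γ * (r + 1) * Real.logb 2 ℓ → γ * #F ^ 2 ≤ r * #(noncompPairs F) := by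
  classical
  obtain ⟨c, hc, hsuper⟩ := exists_pos_le_dens_strictMono r hγ
  filter_upwards [eventually_dens_isChainIn_lt (p := r + 1) r.succ_pos hγ hc, eventually_ge_atTop 1]
    with ℓ hfew hℓ V _ F hF hV
  by_contra! hN
  have isChainIn_of_strictMono (x : Fin (r + 1) → F) (hx : StrictMono x) :
      IsChainIn ∅ univ fun i ↦ (x i : Finset V) :=
    ⟨hx, fun i ↦ ⟨empty_subset _, subset_univ _⟩⟩
  refine (hfew F ∅ univ hF (by rw [sdiff_empty, card_univ]; exact_mod_cast hV)).not_ge ?_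
  refine (hsuper F (card_pos.1 (hℓ.trans hF)) hN.le).trans (NNRat.cast_mono ?_)
  gcongr with x
  exact isChainIn_of_strictMono x

lemma eventually_mul_logb_le_card_noncompPairs_of_card_mem (K : ℝ) {γ : ℝ} (hγ0 : 0 < γ)
    (hγ : γ < 1) :
    ∀ᶠ ℓ : ℕ in atTop, ∀ {V : Type u} (F : Finset (Finset V)) (a b : ℕ), ℓ ≤ #F → a ≤ b →
      (∀ A ∈ F, a ≤ #A ∧ #A ≤ b) → b - a ≤ K * Real.logb 2 ℓ →
        γ ^ 2 * #F ^ 2 * Real.logb 2 ℓ ≤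
          (b - a + 2 * Real.logb 2 ℓ) * #(noncompPairs F) := by
  have hlocal : ∀ᶠ ℓ : ℕ in atTop, ∀ p ∈ Finset.Icc 1 (⌊K / γ⌋₊ + 1),
      ∀ {V : Type u} (F : Finset (Finset V)) (a b : ℕ), ℓ ≤ #F →
        (∀ A ∈ F, a ≤ #A ∧ #A ≤ b) → b - a ≤ γ * p * Real.logb 2 ℓ →
          γ * #F ^ 2 ≤ (p + 1) * #(noncompPairs F) :=
    (eventually_all_finset _).2 fun p hp ↦
      eventually_mul_sq_le_card_noncompPairs_of_card_mem (mem_Icc.1 hp).1 hγ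
  filter_upwards [hlocal, eventually_ge_atTop 2] with ℓ hlocal hℓ V F a b hF hab hsizes hba
  set L := Real.logb 2 ℓ
  have hL : 0 < L := Real.logb_pos one_lt_two (mod_cast hℓ)
  have hab' : (0 : ℝ) ≤ b - a := sub_nonneg.2 (mod_cast hab)
  let p := ⌊(b - a) / (γ * L)⌋₊ + 1
  have hp : p ∈ Finset.Icc 1 (⌊K / γ⌋₊ + 1) := by
    refine mem_Icc.2 ⟨Nat.succ_pos _, Nat.succ_le_succ (Nat.floor_mono ?_)⟩
    rw [div_le_div_iff₀ (by positivity) hγ0]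
    nlinarith
  have hpγ : (b - a : ℝ) ≤ γ * p * L := by
    have := (Nat.lt_floor_add_one ((b - a : ℝ) / (γ * L))).le
    rw [div_le_iff₀ (by positivity)] at this
    push_cast [p]
    linarith
  have hp_le : γ * L * (p + 1) ≤ b - a + 2 * L := by
    have := Nat.floor_le (a := (b - a : ℝ) / (γ * L)) (by positivity)
    rw [le_div_iff₀ (by positivity)] at this
    push_cast [p]
    nlinarith
  calc γ ^ 2 * #F ^ 2 * L = γ * L * (γ * #F ^ 2) := by ring
    _ ≤ γ * L * ((p + 1) * #(noncompPairs F)) := by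
        exact mul_le_mul_of_nonneg_left (hlocal p hp F a b hF hsizes hpγ) (by positivity)
    _ ≤ _ := by
        rw [← mul_assoc]
        gcongr

lemma eventually_mul_logb_le_card_noncompPairs_of_card_univ_le (K : ℝ) {γ : ℝ} (hγ0 : 0 < γ)
    (hγ : γ < 1) :
    ∀ᶠ ℓ : ℕ in atTop, ∀ {V : Type u} [Fintype V] (F : Finset (Finset V)), ℓ ≤ #F →
      Fintype.card V ≤ K * Real.logb 2 ℓ →
        γ ^ 2 * #F ^ 2 * Real.logb 2 ℓ ≤ Fintype.card V * #(noncompPairs F) := by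
  have hlocal : ∀ᶠ ℓ : ℕ in atTop, ∀ r ∈ Finset.range (⌊K / γ⌋₊ + 1),
      ∀ {V : Type u} [Fintype V] (F : Finset (Finset V)), ℓ ≤ #F →
        Fintype.card V ≤ γ * (r + 1) * Real.logb 2 ℓ → γ * #F ^ 2 ≤ r * #(noncompPairs F) :=
    (eventually_all_finset _).2 fun r _ ↦
      eventually_mul_sq_le_card_noncompPairs_of_card_univ_le r hγ
  filter_upwards [hlocal, eventually_ge_atTop 2] with ℓ hlocal hℓ V _ F hF hV
  set L := Real.logb 2 ℓ
  have hL : 0 < L := Real.logb_pos one_lt_two (mod_cast hℓ)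
  let r := ⌊Fintype.card V / (γ * L)⌋₊
  have hr : r ∈ Finset.range (⌊K / γ⌋₊ + 1) := by
    refine mem_range.2 (Nat.lt_succ_of_le (Nat.floor_mono ?_))
    rw [div_le_div_iff₀ (by positivity) hγ0]
    nlinarith
  have hrγ : Fintype.card V ≤ γ * (r + 1) * L := by
    have := (Nat.lt_floor_add_one (Fintype.card V / (γ * L))).le
    rw [div_le_iff₀ (by positivity)] at this
    linarith
  have hr_le : γ * L * r ≤ Fintype.card V := by
    have := Nat.floor_le (a := Fintype.card V / (γ * L)) (by positivity)
    rwa [le_div_iff₀ (by positivity), mul_comm] at this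
  calc γ ^ 2 * #F ^ 2 * L = γ * L * (γ * #F ^ 2) := by ring
    _ ≤ γ * L * (r * #(noncompPairs F)) := by
        exact mul_le_mul_of_nonneg_left (hlocal r hr F hF hrγ) (by positivity)
    _ ≤ _ := by
        rw [← mul_assoc]
        gcongr

lemma eventually_tangent_le_card_noncompPairs {R γ : ℝ} (hR : 0 ≤ R) (hγ0 : 0 < γ) (hγ : γ < 1) :
    ∀ᶠ ℓ : ℕ in atTop, ∀ {V : Type u} (F : Finset (Finset V)) (a b : ℕ), ℓ ≤ #F → a ≤ b →
      (∀ A ∈ F, a ≤ #A ∧ #A ≤ b) →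
        (γ * #F / (R + 2)) ^ 2 * (2 * R + 2 - (b - a) / Real.logb 2 ℓ) ≤ #(noncompPairs F) := by
  filter_upwards [eventually_mul_logb_le_card_noncompPairs_of_card_mem (2 * R + 2) hγ0 hγ,
    eventually_ge_atTop 2] with ℓ hlocal hℓ V F a b hF hab hsizes
  set L := Real.logb 2 ℓ
  have hL : 0 < L := Real.logb_pos one_lt_two (mod_cast hℓ)
  have hw0 : (0 : ℝ) ≤ (b - a) / L := div_nonneg (sub_nonneg.2 (mod_cast hab)) hL.le
  obtain hwide | hnarrow := le_total (2 * R + 2) ((b - a) / L)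
  · exact (mul_nonpos_of_nonneg_of_nonpos (sq_nonneg _) (sub_nonpos.2 hwide)).trans
      (Nat.cast_nonneg _)
  have hN := hlocal F a b hF hab hsizes ((div_le_iff₀ hL).1 hnarrow)
  generalize hw : ((b : ℝ) - a) / L = w at *
  rw [div_eq_iff hL.ne'] at hw
  have hNw : γ ^ 2 * #F ^ 2 ≤ (w + 2) * #(noncompPairs F) := by
    rw [hw] at hN
    nlinarith
  have hamgm : (w + 2) * (2 * R + 2 - w) ≤ (R + 2) ^ 2 := by nlinarith [sq_nonneg (w - R)]
  rw [div_pow, mul_pow, div_mul_eq_mul_div, div_le_iff₀ (by positivity)]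
  calc γ ^ 2 * #F ^ 2 * (2 * R + 2 - w)
      ≤ (w + 2) * #(noncompPairs F) * (2 * R + 2 - w) := by
        gcongr
    _ = #(noncompPairs F) * ((w + 2) * (2 * R + 2 - w)) := by ring
    _ ≤ #(noncompPairs F) * (R + 2) ^ 2 := by gcongr

end LocalBounds

section Blocks

variable {α : Type*}

lemma card_noncompPairs_add_le [Preorder α] [DecidableEq α] {F G : Finset α} (hG : G ⊆ F) :
    #(noncompPairs G) + #(noncompPairs (F \ G)) ≤ #(noncompPairs F) := by
  rw [← card_union_of_disjoint]
  · refine card_le_card fun z hz ↦ ?_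
    simp only [mem_union, mem_noncompPairs, mem_sdiff] at hz ⊢
    grind
  · refine disjoint_left.2 fun z hz hz' ↦ ?_
    exact (mem_sdiff.1 (mem_noncompPairs.1 hz').1.1).2 (mem_noncompPairs.1 hz).1.1

lemma exists_subset_card_eq_forall_le {β : Type*} [LinearOrder β] [DecidableEq α] (f : α → β)
    {F : Finset α} {m : ℕ} (hm : m ≤ #F) :
    ∃ G ⊆ F, #G = m ∧ ∀ x ∈ G, ∀ y ∈ F \ G, f x ≤ f y := by
  induction m with
  | zero => exact ⟨∅, empty_subset _, card_empty, by simp⟩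
  | succ m ih =>
    obtain ⟨G, hGF, rfl, hG⟩ := ih (by omega)
    have hrest : (F \ G).Nonempty := by
      rw [← card_pos, card_sdiff_of_subset hGF]
      omega
    obtain ⟨z, hz, hmin⟩ := exists_min_image (F \ G) f hrest
    obtain ⟨hzF, hzG⟩ := mem_sdiff.1 hz
    refine ⟨insert z G, insert_subset hzF hGF, card_insert_of_notMem hzG, fun x hx y hy ↦ ?_⟩
    have hy' : y ∈ F \ G := sdiff_subset_sdiff subset_rfl (subset_insert z G) hy
    obtain rfl | hx := mem_insert.1 hx
    · exact hmin y hy'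
    · exact hG x hx y hy'

/-- Cut `F` into consecutive blocks of size `m` along `f`: the widths of their windows add up to at
most `b - a`, so a bound on a block that is affine in its width can be summed. -/
lemma mul_sub_le_card_noncompPairs [Preorder α] {f : α → ℕ} {m : ℕ} {u v : ℝ} (hv : 0 ≤ v)
    (hm : 0 < m)
    (hblock : ∀ (G : Finset α) (a b : ℕ), #G = m → a ≤ b → (∀ x ∈ G, a ≤ f x ∧ f x ≤ b) →
      u - v * (b - a) ≤ #(noncompPairs G))
    {q : ℕ} {F : Finset α} {a b : ℕ} (hF : q * m ≤ #F) (hab : a ≤ b)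
    (hf : ∀ x ∈ F, a ≤ f x ∧ f x ≤ b) :
    q * u - v * (b - a) ≤ #(noncompPairs F) := by
  classical
  induction q generalizing F a with
  | zero =>
    have : (0 : ℝ) ≤ v * (b - a) := mul_nonneg hv (sub_nonneg.2 (mod_cast hab))
    have : (0 : ℝ) ≤ #(noncompPairs F) := Nat.cast_nonneg _
    push_cast
    linarith
  | succ q ih =>
    rw [add_one_mul] at hF
    obtain ⟨G, hGF, hGm, hG⟩ := exists_subset_card_eq_forall_le f (le_of_add_le_right hF)
    obtain ⟨z, hz, hmax⟩ := exists_max_image G f (card_pos.1 (hGm ▸ hm))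
    obtain ⟨haz, hzb⟩ := hf z (hGF hz)
    have hfirst := hblock G a (f z) hGm haz fun x hx ↦ ⟨(hf x (hGF hx)).1, hmax x hx⟩
    have hrest := ih (F := F \ G) (by rw [card_sdiff_of_subset hGF]; omega) hzb
      fun y hy ↦ ⟨hG z hz y hy, (hf y (sdiff_subset hy)).2⟩
    have hadd : (#(noncompPairs G) + #(noncompPairs (F \ G)) : ℝ) ≤ #(noncompPairs F) :=
      mod_cast card_noncompPairs_add_le hGF
    push_cast
    linarith

end Blocks

section GlobalBound

universe u

open Filter

lemma sq_mul_le_sq_mul_sub_div {R ℓ L n m q : ℝ} (hR : 1 ≤ R) (hℓ : 0 < ℓ) (hL : 0 < L)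
    (hm : R * (ℓ * L) ≤ m) (hm' : m ≤ (R + 1) * (ℓ * L)) (hq : n * ℓ ≤ (q + 1) * m)
    (hn : 2 * (R + 1) ^ 2 * L ≤ n) :
    R ^ 2 * (n * ℓ ^ 2 * L) ≤ m ^ 2 * (q * (2 * R + 2) - n / L) := by
  obtain ⟨ρ, rfl⟩ : ∃ ρ, m = ρ * (ℓ * L) := ⟨m / (ℓ * L), by field_simp⟩
  have hρ : R ≤ ρ := le_of_mul_le_mul_right hm (by positivity)
  have hρ' : ρ ≤ R + 1 := le_of_mul_le_mul_right hm' (by positivity)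
  have hqρ : n ≤ (q + 1) * (ρ * L) := by
    refine le_of_mul_le_mul_right ?_ hℓ
    linarith
  have hρ0 : 0 ≤ ρ := by linarith
  have hn0 : 0 ≤ n := le_trans (by positivity) hn
  have hmain : R ^ 2 + 2 * R ≤ ρ * (2 * R + 2 - ρ) := by nlinarith
  have herror : ρ ^ 2 * (2 * R + 2) * L ≤ 2 * R * n :=
    calc ρ ^ 2 * (2 * R + 2) * L ≤ (R + 1) ^ 2 * (2 * R + 2 * R) * L := by gcongr; linarith
      _ = 2 * R * (2 * (R + 1) ^ 2 * L) := by ring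
      _ ≤ 2 * R * n := by gcongr
  have hkey : R ^ 2 * n ≤ ρ * (q * (ρ * L)) * (2 * R + 2) - ρ ^ 2 * n := by
    have hq' : ρ * (2 * R + 2) * (n - ρ * L) ≤ ρ * (2 * R + 2) * (q * (ρ * L)) := by
      gcongr
      linarith
    nlinarith [mul_le_mul_of_nonneg_right hmain hn0]
  calc R ^ 2 * (n * ℓ ^ 2 * L) = ℓ ^ 2 * L * (R ^ 2 * n) := by ring
    _ ≤ ℓ ^ 2 * L * (ρ * (q * (ρ * L)) * (2 * R + 2) - ρ ^ 2 * n) := by gcongr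
    _ = (ρ * (ℓ * L)) ^ 2 * (q * (2 * R + 2) - n / L) := by
        field_simp

lemma eventually_mul_le_card_noncompPairs_of_le_card_univ {R γ : ℝ} (hR : 1 ≤ R) (hγ0 : 0 < γ)
    (hγ : γ < 1) :
    ∀ᶠ ℓ : ℕ in atTop, ∀ {V : Type u} [Fintype V] (F : Finset (Finset V)),
      #F = Fintype.card V * ℓ → 2 * (R + 1) ^ 2 * Real.logb 2 ℓ ≤ Fintype.card V →
        (γ * (R / (R + 2))) ^ 2 * (Fintype.card V * ℓ ^ 2 * Real.logb 2 ℓ) ≤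
          #(noncompPairs F) := by
  filter_upwards [eventually_tangent_le_card_noncompPairs (zero_le_one.trans hR) hγ0 hγ,
    eventually_ge_atTop 2] with ℓ hblock hℓ V _ F hF hV
  set L := Real.logb 2 ℓ
  have hℓ2 : (2 : ℝ) ≤ ℓ := mod_cast hℓ
  have hL : 1 ≤ L := (Real.le_logb_iff_rpow_le one_lt_two (by positivity)).2 (by simpa)
  let m := ⌈R * (ℓ * L)⌉₊
  have hm : R * (ℓ * L) ≤ m := Nat.le_ceil _
  have hm' : m ≤ (R + 1) * (ℓ * L) := by
    have := (Nat.ceil_lt_add_one (a := R * (ℓ * L)) (by positivity)).le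
    nlinarith
  have hℓm : ℓ ≤ m := by
    have : (ℓ : ℝ) ≤ m := le_trans (by nlinarith [one_le_mul_of_one_le_of_one_le hR hL]) hm
    exact_mod_cast this
  have hm0 : 0 < m := by omega
  have hq : (Fintype.card V * ℓ : ℝ) ≤ ((#F / m : ℕ) + 1) * m := by
    rw [mul_comm ((#F / m : ℕ) + 1 : ℝ), ← Nat.cast_mul, ← hF]
    exact_mod_cast (Nat.lt_mul_div_succ #F hm0).le
  have hsum := mul_sub_le_card_noncompPairs (F := F) (f := card) (a := 0) (b := Fintype.card V)
    (u := (γ * m / (R + 2)) ^ 2 * (2 * R + 2)) (v := (γ * m / (R + 2)) ^ 2 / L) (by positivity) hm0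
    (fun G a b hG hab hsizes ↦ ?_) (Nat.div_mul_le_self _ _) (Nat.zero_le _)
    fun A _ ↦ ⟨Nat.zero_le _, card_le_univ A⟩
  swap
  · convert hblock G a b (hG ▸ hℓm) hab hsizes using 1
    rw [hG]
    ring
  calc (γ * (R / (R + 2))) ^ 2 * (Fintype.card V * ℓ ^ 2 * L)
      = (γ / (R + 2)) ^ 2 * (R ^ 2 * (Fintype.card V * ℓ ^ 2 * L)) := by ring
    _ ≤ (γ / (R + 2)) ^ 2 * (m ^ 2 * ((#F / m : ℕ) * (2 * R + 2) - Fintype.card V / L)) := by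
        refine mul_le_mul_of_nonneg_left ?_ (sq_nonneg _)
        exact sq_mul_le_sq_mul_sub_div hR (by positivity) (by positivity) hm hm' hq hV
    _ ≤ #(noncompPairs F) := by
        refine le_of_eq_of_le ?_ hsum
        push_cast
        ring

lemma eventually_mul_le_card_noncompPairs {δ : ℝ} (hδ0 : 0 < δ) (hδ1 : δ < 1) :
    ∀ᶠ ℓ : ℕ in atTop, ∀ {V : Type u} [Fintype V] (F : Finset (Finset V)),
      #F = Fintype.card V * ℓ →
        (1 - 4 * δ) * (Fintype.card V * ℓ ^ 2 * Real.logb 2 ℓ) ≤ #(noncompPairs F) := by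
  have hR : 1 ≤ 2 / δ := (one_le_div hδ0).2 (by linarith)
  have hγ0 : 0 < 1 - δ := by linarith
  have hγ1 : 1 - δ < 1 := by linarith
  have hratio : 1 - δ ≤ 2 / δ / (2 / δ + 2) := by
    rw [le_div_iff₀ (by positivity), ← sub_nonneg]
    field_simp
    nlinarith
  have hbernoulli : 1 - 4 * δ ≤ ((1 - δ) * (1 - δ)) ^ 2 := by
    have := one_add_mul_le_pow (a := -δ) (by linarith) 4
    push_cast at this
    linear_combination this
  filter_upwards [eventually_mul_le_card_noncompPairs_of_le_card_univ hR hγ0 hγ1,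
    eventually_mul_logb_le_card_noncompPairs_of_card_univ_le (2 * (2 / δ + 1) ^ 2) hγ0 hγ1,
    eventually_ge_atTop 1] with ℓ hlarge hsmall hℓ V _ F hF
  have hL : 0 ≤ Real.logb 2 ℓ := Real.logb_nonneg one_lt_two (mod_cast hℓ)
  obtain hV | hV := le_total (2 * (2 / δ + 1) ^ 2 * Real.logb 2 ℓ) (Fintype.card V : ℝ)
  · refine le_trans ?_ (hlarge F hF hV)
    gcongr
    exact hbernoulli.trans (by gcongr)
  · obtain hV0 | hV0 := (Fintype.card V).eq_zero_or_pos
    · simp [hV0]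
    refine le_of_mul_le_mul_left ?_ (Nat.cast_pos (α := ℝ).2 hV0)
    refine le_trans ?_ (hsmall F (hF ▸ Nat.le_mul_of_pos_left ℓ hV0) hV)
    calc Fintype.card V * ((1 - 4 * δ) * (Fintype.card V * ℓ ^ 2 * Real.logb 2 ℓ))
        = (1 - 4 * δ) * (Fintype.card V * ℓ) ^ 2 * Real.logb 2 ℓ := by ring
      _ ≤ (1 - δ) ^ 2 * (#F : ℝ) ^ 2 * Real.logb 2 ℓ := by
          rw [hF, Nat.cast_mul]
          gcongr
          nlinarith [sq_nonneg δ]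

end GlobalBound

section IncomparablePairs

lemma card_noncompPairs_add_two_mul_card_filter_lt {α : Type*} [Preorder α] [DecidableLT α]
    (F : Finset α) : #(noncompPairs F) + 2 * #{z ∈ F ×ˢ F | z.1 < z.2} = #F ^ 2 := by
  have hnot : {z ∈ F ×ˢ F | ¬ z.1 < z.2 ∧ ¬ z.2 < z.1} = noncompPairs F := by
    ext z
    simp only [mem_filter, mem_product, mem_noncompPairs]
  have hgt : #{z ∈ F ×ˢ F | ¬ z.1 < z.2 ∧ z.2 < z.1} = #{z ∈ F ×ˢ F | z.1 < z.2} := by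
    refine card_equiv (Equiv.prodComm α α) fun z ↦ ?_
    simp only [mem_filter, mem_product, Equiv.prodComm_apply, Prod.fst_swap, Prod.snd_swap]
    grind [lt_asymm]
  have hsplit := card_filter_add_card_filter_not (s := F ×ˢ F) fun z ↦ z.1 < z.2
  have hsplit' := card_filter_add_card_filter_not (s := {z ∈ F ×ˢ F | ¬ z.1 < z.2})
    fun z ↦ z.2 < z.1
  rw [filter_filter, filter_filter, hnot, hgt] at hsplit'
  rw [card_product, ← sq] at hsplit
  omega

lemma card_le_card_noncompPairs {α : Type*} [Preorder α] (F : Finset α) :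
    #F ≤ #(noncompPairs F) := by
  rw [← diag_card]
  refine card_le_card fun z hz ↦ ?_
  obtain ⟨hz, hdiag⟩ := mem_diag.1 hz
  simp [mem_noncompPairs, ← hdiag, hz]

lemma two_mul_incompCount_add_card {n : ℕ} (F : Finset (Finset (Fin n))) :
    2 * incompCount F + #F = #(noncompPairs F) := by
  have hpairs : #(noncompPairs F) + 2 * compCount F = #F ^ 2 :=
    card_noncompPairs_add_two_mul_card_filter_lt F
  have hdiag := card_le_card_noncompPairs F
  have hchoose : 2 * (#F).choose 2 + #F = #F ^ 2 := by
    qify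
    rw [Nat.cast_choose_two]
    ring
  unfold incompCount
  omega

lemma eventually_mul_le_two_mul_incompCount {δ : ℝ} (hδ0 : 0 < δ) (hδ1 : δ < 1) :
    ∀ᶠ ℓ : ℕ in Filter.atTop, ∀ {n : ℕ} (F : Finset (Finset (Fin n))), #F = n * ℓ →
      (1 - 5 * δ) * (n * ℓ ^ 2 * Real.logb 2 ℓ) ≤ 2 * incompCount F := by
  filter_upwards [eventually_mul_le_card_noncompPairs hδ0 hδ1, Filter.eventually_ge_atTop 2,
    Filter.eventually_ge_atTop ⌈1 / δ⌉₊] with ℓ hbound hℓ2 hδℓ n F hF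
  have hL : 1 ≤ Real.logb 2 ℓ := by
    rw [Real.le_logb_iff_rpow_le one_lt_two (by positivity)]
    exact_mod_cast hℓ2
  have hδℓL : 1 ≤ δ * ℓ * Real.logb 2 ℓ :=
    one_le_mul_of_one_le_of_one_le ((div_le_iff₀' hδ0).1 (Nat.ceil_le.1 hδℓ)) hL
  have hnoncomp : (1 - 4 * δ) * (n * ℓ ^ 2 * Real.logb 2 ℓ) ≤ #(noncompPairs F) := by
    simpa using hbound F (by simpa using hF)
  have hcard : (#F : ℝ) ≤ δ * (n * ℓ ^ 2 * Real.logb 2 ℓ) :=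
    calc (#F : ℝ) = n * ℓ * 1 := by rw [hF, Nat.cast_mul, mul_one]
      _ ≤ n * ℓ * (δ * ℓ * Real.logb 2 ℓ) := by gcongr
      _ = δ * (n * ℓ ^ 2 * Real.logb 2 ℓ) := by ring
  have hincomp : (2 * incompCount F + #F : ℝ) = #(noncompPairs F) :=
    mod_cast two_mul_incompCount_add_card F
  linarith

end IncomparablePairs

theorem stmt8 (ε : ℝ) (hε : 0 < ε) :
    ∃ ℓ₀ n₀ : ℕ, ∀ ℓ ≥ ℓ₀, ∀ n ≥ n₀, n * ℓ ≤ 2 ^ n →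
      ∀ ℱ : Finset (Finset (Fin n)), ℱ.card = n * ℓ →
        (1 / 2 - ε) * n * (ℓ : ℝ) ^ 2 * Real.logb 2 ℓ ≤ (incompCount ℱ : ℝ) := by
  obtain ⟨δ, hδ0, hδ⟩ : ∃ δ, 0 < δ ∧ δ < min (2 / 5 * ε) 1 := exists_between (by positivity)
  obtain ⟨hδε, hδ1⟩ := lt_min_iff.1 hδ
  obtain ⟨ℓ₀, hℓ₀⟩ := Filter.eventually_atTop.1 (eventually_mul_le_two_mul_incompCount hδ0 hδ1)
  refine ⟨max ℓ₀ 1, 0, fun ℓ hℓ n _ _ ℱ hℱ ↦ ?_⟩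
  obtain ⟨hℓℓ₀, hℓ1⟩ := max_le_iff.1 hℓ
  have hL : 0 ≤ Real.logb 2 ℓ := Real.logb_nonneg one_lt_two (mod_cast hℓ1)
  calc (1 / 2 - ε) * n * (ℓ : ℝ) ^ 2 * Real.logb 2 ℓ
      = (1 - 2 * ε) * (n * ℓ ^ 2 * Real.logb 2 ℓ) / 2 := by ring
    _ ≤ (1 - 5 * δ) * (n * ℓ ^ 2 * Real.logb 2 ℓ) / 2 := by
        gcongr ?_ * _ / _
        linarith
    _ ≤ incompCount ℱ := by linarith [hℓ₀ ℓ hℓℓ₀ ℱ hℱ]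
end
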